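/- arXiv:1406.3842 — 2 statements merged into one kernel-verified Lean document; each statement's English description precedes it below -/
import Mathlib

section
/- (Riesz factorization, weak form) Every f ∈ H¹ of the unit disk can be written f = g·h with g, h ∈ H² and ‖g‖_{H²}² = ‖h‖_{H²}² = ‖f‖_{H¹}; in particular H¹ = H²·H². -/
open Metric

/-- The `p`-th boundary integral mean of `f` at radius `r`. -/
noncomputable def hardyMean (p : ℝ) (f : ℂ → ℂ) (r : ℝ) : ℝ :=
  ((1 / (2 * Real.pi)) *
    ∫ t in (0:ℝ)..(2 * Real.pi), ‖f (r * Complex.exp (t * Complex.I))‖ ^ p) ^ (1 / p)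

/-- Membership in the Hardy space `H^p` of the unit disk. -/
def MemHp (p : ℝ) (f : ℂ → ℂ) : Prop :=
  DifferentiableOn ℂ f (ball 0 1) ∧
    BddAbove (Set.range fun r : Set.Ioo (0:ℝ) 1 => hardyMean p f r)

/-- The `H^p` norm of `f`. -/
noncomputable def hpNorm (p : ℝ) (f : ℂ → ℂ) : ℝ :=
  ⨆ r : Set.Ioo (0:ℝ) 1, hardyMean p f r

open Filter Topology

lemma rf_orth (k l : ℕ) : ∫ t in (0:ℝ)..(2*Real.pi),
    (Complex.exp (t * Complex.I)) ^ k * (starRingEnd ℂ) ((Complex.exp (t * Complex.I)) ^ l)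
    = if k = l then 2 * Real.pi else 0 := by
  have h : ∀ t : ℝ, (Complex.exp (t * Complex.I)) ^ k * (starRingEnd ℂ) ((Complex.exp (t * Complex.I)) ^ l)
      = Complex.exp ((((k:ℤ) - (l:ℤ) : ℤ) : ℂ) * Complex.I * t) := by
    intro t
    rw [map_pow, ← Complex.exp_conj, ← Complex.exp_nat_mul, ← Complex.exp_nat_mul, ← Complex.exp_add]
    congr 1
    simp
    ring
  simp_rw [h]
  split_ifs with hkl
  · subst hkl; simp
  · rw [integral_exp_mul_complex]
    · have : ((((k:ℤ) - (l:ℤ) : ℤ) : ℂ) * Complex.I * ((2 * Real.pi : ℝ) : ℂ)) =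
          (((k:ℤ) - (l:ℤ) : ℤ) : ℂ) * (2 * Real.pi * Complex.I) := by push_cast; ring
      rw [this, Complex.exp_int_mul_two_pi_mul_I]
      simp
    · have : ((k:ℤ) - (l:ℤ) : ℤ) ≠ 0 := by omega
      exact mul_ne_zero (by exact_mod_cast this) Complex.I_ne_zero

lemma rf_fin (c : ℕ → ℂ) (K : ℕ) : ∫ t in (0:ℝ)..(2*Real.pi),
    ‖∑ k ∈ Finset.range K, c k * (Complex.exp (t * Complex.I)) ^ k‖ ^ 2
    = 2 * Real.pi * ∑ k ∈ Finset.range K, ‖c k‖ ^ 2 := by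
  have h : ∀ t : ℝ, (((‖∑ k ∈ Finset.range K, c k * (Complex.exp (t * Complex.I)) ^ k‖ ^ 2 : ℝ)) : ℂ)
      = ∑ k ∈ Finset.range K, ∑ l ∈ Finset.range K, c k * (starRingEnd ℂ) (c l) *
        ((Complex.exp (t * Complex.I)) ^ k * (starRingEnd ℂ) ((Complex.exp (t * Complex.I)) ^ l)) := by
    intro t
    push_cast
    rw [← Complex.mul_conj', map_sum, Finset.sum_mul_sum]
    refine Finset.sum_congr rfl fun k _ => Finset.sum_congr rfl fun l _ => ?_
    rw [map_mul]; ring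
  have hc : ∀ k l : ℕ, Continuous fun t : ℝ => c k * (starRingEnd ℂ) (c l) *
        ((Complex.exp (t * Complex.I)) ^ k * (starRingEnd ℂ) ((Complex.exp (t * Complex.I)) ^ l)) := by
    intro k l
    have := Complex.continuous_conj
    fun_prop
  apply Complex.ofReal_injective
  rw [← intervalIntegral.integral_ofReal]
  simp_rw [h]
  rw [intervalIntegral.integral_finsetSum]
  · rw [Complex.ofReal_mul, Complex.ofReal_sum, Finset.mul_sum]
    refine Finset.sum_congr rfl fun k hk => ?_
    rw [intervalIntegral.integral_finsetSum]
    · have h3 : ∀ l, (∫ t in (0:ℝ)..(2*Real.pi), c k * (starRingEnd ℂ) (c l) *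
          ((Complex.exp (t * Complex.I)) ^ k * (starRingEnd ℂ) ((Complex.exp (t * Complex.I)) ^ l))) =
          c k * (starRingEnd ℂ) (c l) * (if k = l then 2 * Real.pi else 0) := by
        intro l
        rw [intervalIntegral.integral_const_mul, rf_orth]
      rw [Finset.sum_congr rfl fun l _ => h3 l]
      rw [Finset.sum_eq_single_of_mem k hk (fun l _ hl => by simp [hl.symm]), if_pos rfl]
      rw [Complex.mul_conj']; push_cast; ring
    · intro l _
      exact (hc k l).intervalIntegrable _ _
  · intro k _
    exact (continuous_finsetSum _ fun l _ => hc k l).intervalIntegrable _ _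

lemma rf_parseval (c : ℕ → ℂ) (hc : Summable fun k => ‖c k‖) :
    HasSum (fun k => ‖c k‖ ^ 2) (1 / (2 * Real.pi) * ∫ t in (0:ℝ)..(2*Real.pi),
      ‖∑' k, c k * (Complex.exp (t * Complex.I)) ^ k‖ ^ 2) := by
  rw [hasSum_iff_tendsto_nat_of_nonneg (fun _ => by positivity)]
  have hn : ∀ (t : ℝ) k, ‖c k * (Complex.exp (t * Complex.I)) ^ k‖ = ‖c k‖ := by
    intro t k; rw [norm_mul, norm_pow, Complex.norm_exp_ofReal_mul_I]; simp
  have key : Tendsto (fun K => ∫ t in (0:ℝ)..(2*Real.pi),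
      ‖∑ k ∈ Finset.range K, c k * (Complex.exp (t * Complex.I)) ^ k‖ ^ 2) atTop
      (𝓝 (∫ t in (0:ℝ)..(2*Real.pi),
      ‖∑' k, c k * (Complex.exp (t * Complex.I)) ^ k‖ ^ 2)) := by
    apply intervalIntegral.tendsto_integral_filter_of_dominated_convergence
      (fun _ => (∑' k, ‖c k‖) ^ 2)
    · refine Eventually.of_forall fun K => Continuous.aestronglyMeasurable ?_
      fun_prop
    · refine Eventually.of_forall fun K => Eventually.of_forall fun t _ => ?_
      rw [norm_pow, norm_norm]
      gcongr
      refine (norm_sum_le _ _).trans ?_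
      simp_rw [hn]
      exact hc.sum_le_tsum _ (fun _ _ => norm_nonneg _)
    · simp
    · refine Eventually.of_forall fun t _ => ?_
      have : Summable fun k => c k * (Complex.exp (t * Complex.I)) ^ k :=
        Summable.of_norm (by simpa only [hn] using hc)
      exact (this.hasSum.tendsto_sum_nat.norm).pow 2
  have := key.const_mul (1 / (2 * Real.pi))
  refine this.congr fun K => ?_
  rw [rf_fin]
  field_simp

/-- Power series representation on the disc. -/
def RfPS (c : ℕ → ℂ) (f : ℂ → ℂ) : Prop := ∀ z ∈ ball (0:ℂ) 1, HasSum (fun k => c k * z ^ k) (f z)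

noncomputable def rfMn (φ : ℂ → ℝ) (r : ℝ) : ℝ :=
  1 / (2 * Real.pi) * ∫ t in (0:ℝ)..(2*Real.pi), φ (r * Complex.exp (t * Complex.I))

def RfS (c : ℕ → ℂ) (M : ℝ) : Prop := ∃ a b : ℕ → ℂ,
  (∀ K, ∑ k ∈ Finset.range K, ‖a k‖ ^ 2 ≤ M) ∧ (∀ K, ∑ k ∈ Finset.range K, ‖b k‖ ^ 2 ≤ M) ∧
  ∀ k, c k = ∑ p ∈ Finset.HasAntidiagonal.antidiagonal k, a p.1 * b p.2

lemma rf_mem (r t : ℝ) (h0 : 0 ≤ r) (h1 : r < 1) : (r * Complex.exp (t * Complex.I)) ∈ ball (0:ℂ) 1 := by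
  simp [Complex.norm_exp_ofReal_mul_I, abs_of_nonneg h0, h1]

lemma RfPS.summable {c f} (h : RfPS c f) {r : ℝ} (h0 : 0 ≤ r) (h1 : r < 1) :
    Summable fun k => ‖c k * (r:ℂ) ^ k‖ :=
  (h r (by simp [abs_of_nonneg h0, h1])).summable.norm

lemma RfPS.parseval {c f} (h : RfPS c f) {r : ℝ} (h0 : 0 ≤ r) (h1 : r < 1) :
    HasSum (fun k => ‖c k‖ ^ 2 * (r ^ k) ^ 2) (rfMn (fun z => ‖f z‖ ^ 2) r) := by
  have := rf_parseval _ (h.summable h0 h1)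
  unfold rfMn
  convert this using 1
  · ext k; simp [abs_of_nonneg h0, mul_pow]
  · congr 1
    apply intervalIntegral.integral_congr
    intro t _
    simp only
    rw [← (h _ (rf_mem r t h0 h1)).tsum_eq]
    simp only [mul_pow, mul_assoc]

lemma RfPS.of_diff {f : ℂ → ℂ} (hf : DifferentiableOn ℂ f (ball 0 1)) :
    ∃ c, RfPS c f := by
  refine ⟨fun k => ((k.factorial : ℂ))⁻¹ * iteratedDeriv k f 0, fun z hz => ?_⟩
  refine (Complex.hasSum_taylorSeries_on_ball hf hz).congr_fun ?_
  intro k; simp; ring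

lemma RfPS.unique {c d f} (hc : RfPS c f) (hd : RfPS d f) : c = d := by
  have key : ∀ e, RfPS e f → HasFPowerSeriesAt f (FormalMultilinearSeries.ofScalars ℂ e) 0 := by
    intro e he
    rw [hasFPowerSeriesAt_iff]
    filter_upwards [ball_mem_nhds (0:ℂ) one_pos] with z hz
    simpa [FormalMultilinearSeries.coeff_ofScalars, mul_comm] using he z hz
  have := (key c hc).eq_formalMultilinearSeries (key d hd)
  funext k
  have h2 := congrArg (fun p => FormalMultilinearSeries.coeff p k) this
  simpa [FormalMultilinearSeries.coeff_ofScalars] using h2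

lemma RfPS.mul {a b g h} (ha : RfPS a g) (hb : RfPS b h) :
    RfPS (fun k => ∑ p ∈ Finset.HasAntidiagonal.antidiagonal k, a p.1 * b p.2) (fun z => g z * h z) := by
  intro z hz
  have h1 := (ha z hz).summable.norm
  have h2 := (hb z hz).summable.norm
  have h3 := tsum_mul_tsum_eq_tsum_sum_antidiagonal_of_summable_norm h1 h2
  have h4 := (summable_norm_sum_mul_antidiagonal_of_summable_norm h1 h2).of_norm.hasSum
  rw [← h3, (ha z hz).tsum_eq, (hb z hz).tsum_eq] at h4
  refine h4.congr_fun fun k => ?_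
  rw [Finset.sum_mul]
  refine Finset.sum_congr rfl fun p hp => ?_
  rw [← Finset.HasAntidiagonal.mem_antidiagonal.1 hp, pow_add]; ring

lemma rf_ultra (x : ℕ → ℂ) (C : ℝ) (h : ∀ n, ‖x n‖ ≤ C) :
    ∃ y, Tendsto x (hyperfilter ℕ : Filter ℕ) (𝓝 y) := by
  obtain ⟨y, -, hy⟩ := (isCompact_closedBall (0:ℂ) C).ultrafilter_le_nhds
    ((hyperfilter ℕ).map x) (by
      rw [le_principal_iff]
      exact Ultrafilter.mem_map.2 (by
        filter_upwards with n
        simpa using h n))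
  exact ⟨y, hy⟩

lemma rf_limit (c : ℕ → ℕ → ℂ) (d : ℕ → ℂ) (M : ℕ → ℝ) (L : ℝ)
    (hc : ∀ k, Tendsto (fun n => c n k) atTop (𝓝 (d k))) (hM : Tendsto M atTop (𝓝 L))
    (hS : ∀ n, RfS (c n) (M n)) : RfS d L := by
  choose a b ha hb hab using hS
  obtain ⟨C, hC⟩ := hM.bddAbove_range
  have hC' : ∀ n, M n ≤ C := fun n => hC ⟨n, rfl⟩
  have bd : ∀ (s : ℕ → ℕ → ℂ), (∀ n K, ∑ k ∈ Finset.range K, ‖s n k‖ ^ 2 ≤ M n) →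
      ∀ k n, ‖s n k‖ ≤ Real.sqrt C := by
    intro s hs k n
    apply Real.le_sqrt_of_sq_le
    refine le_trans ?_ ((hs n (k+1)).trans (hC' n))
    exact Finset.single_le_sum (f := fun k => ‖s n k‖ ^ 2) (fun _ _ => by positivity) (by simp)
  have hU : (hyperfilter ℕ : Filter ℕ) ≤ atTop := by
    rw [← Nat.cofinite_eq_atTop]; exact hyperfilter_le_cofinite
  choose A hA using fun k => rf_ultra (fun n => a n k) _ (bd a ha k)
  choose B hB using fun k => rf_ultra (fun n => b n k) _ (bd b hb k)
  refine ⟨A, B, fun K => ?_, fun K => ?_, fun k => ?_⟩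
  · exact le_of_tendsto_of_tendsto' (tendsto_finsetSum _ fun k _ => ((hA k).norm.pow 2))
      (hM.mono_left hU) (fun n => ha n K)
  · exact le_of_tendsto_of_tendsto' (tendsto_finsetSum _ fun k _ => ((hB k).norm.pow 2))
      (hM.mono_left hU) (fun n => hb n K)
  · refine tendsto_nhds_unique ((hc k).mono_left hU) ?_
    simp_rw [hab]
    exact tendsto_finsetSum _ fun p _ => (hA p.1).mul (hB p.2)

def RfGood (F : ℂ → ℂ) : Prop := ∃ (g h : ℂ → ℂ) (u v : ℂ → ℝ),
  DifferentiableOn ℂ g (ball 0 1) ∧ DifferentiableOn ℂ h (ball 0 1) ∧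
  ContinuousOn u (closedBall 0 1) ∧ ContinuousOn v (closedBall 0 1) ∧
  (∀ z ∈ ball (0:ℂ) 1, F z = g z * h z ∧ ‖g z‖ ^ 2 = u z ∧ ‖h z‖ ^ 2 = v z) ∧
  (∀ z ∈ sphere (0:ℂ) 1, u z = ‖F z‖ ∧ v z = ‖F z‖)

lemma RfGood.mul {F G} (hF : RfGood F) (hG : RfGood G) : RfGood (fun z => F z * G z) := by
  obtain ⟨g, h, u, v, h1, h2, h3, h4, h5, h6⟩ := hF
  obtain ⟨g', h', u', v', h1', h2', h3', h4', h5', h6'⟩ := hG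
  refine ⟨fun z => g z * g' z, fun z => h z * h' z, fun z => u z * u' z, fun z => v z * v' z,
    h1.mul h1', h2.mul h2', h3.mul h3', h4.mul h4', fun z hz => ⟨?_, ?_, ?_⟩, fun z hz => ⟨?_, ?_⟩⟩
  · simp only [(h5 z hz).1, (h5' z hz).1]; ring
  · rw [norm_mul, mul_pow, (h5 z hz).2.1, (h5' z hz).2.1]
  · rw [norm_mul, mul_pow, (h5 z hz).2.2, (h5' z hz).2.2]
  · simp only [norm_mul, (h6 z hz).1, (h6' z hz).1]
  · simp only [norm_mul, (h6 z hz).2, (h6' z hz).2]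

lemma RfGood.of_sq {F s : ℂ → ℂ} (hs : DifferentiableOn ℂ s (ball 0 1))
    (hF : ContinuousOn F (closedBall 0 1)) (h : ∀ z ∈ ball (0:ℂ) 1, F z = s z * s z) : RfGood F := by
  refine ⟨s, s, fun z => ‖F z‖, fun z => ‖F z‖, hs, hs, hF.norm, hF.norm,
    fun z hz => ⟨h z hz, ?_, ?_⟩, fun z hz => ⟨rfl, rfl⟩⟩
  all_goals simp only [h z hz, norm_mul]; ring

lemma RfGood.const (a : ℂ) : RfGood (fun _ => a) := by
  obtain ⟨b, hb⟩ := IsAlgClosed.exists_pow_nat_eq a (n := 2) (by norm_num)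
  exact RfGood.of_sq (s := fun _ => b) (by fun_prop) (by fun_prop) (fun z _ => by rw [← hb]; ring)

/-- Square root of `1 - w z`. -/
lemma rf_sqrt (w : ℂ) (hw : ‖w‖ ≤ 1) : ∃ s : ℂ → ℂ, DifferentiableOn ℂ s (ball 0 1) ∧
    ∀ z ∈ ball (0:ℂ) 1, 1 - w * z = s z * s z ∧ s z ≠ 0 := by
  have hlt : ∀ z ∈ ball (0:ℂ) 1, ‖w * z‖ < 1 := by
    intro z hz
    have : ‖z‖ < 1 := by simpa using hz
    rw [norm_mul]
    nlinarith [norm_nonneg z, norm_nonneg w]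
  have hre : ∀ z ∈ ball (0:ℂ) 1, 0 < (1 - w * z).re := by
    intro z hz
    have := (Complex.re_le_norm (w * z)).trans_lt (hlt z hz)
    rw [Complex.sub_re, Complex.one_re]
    linarith
  refine ⟨fun z => Complex.exp (Complex.log (1 - w * z) / 2), ?_, fun z hz => ⟨?_, Complex.exp_ne_zero _⟩⟩
  · apply DifferentiableOn.cexp
    apply DifferentiableOn.div_const
    apply DifferentiableOn.clog (by fun_prop)
    intro z hz
    exact Or.inl (hre z hz)
  · rw [← Complex.exp_add, add_halves, Complex.exp_log]
    intro h
    have := hre z hz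
    rw [h] at this
    simp at this

lemma RfGood.X_sub (α : ℂ) : RfGood (fun z => z - α) := by
  by_cases hα : 1 ≤ ‖α‖
  · have h0 : α ≠ 0 := by rintro rfl; simp at hα; linarith
    obtain ⟨s, hs, hs'⟩ := rf_sqrt α⁻¹ (by rw [norm_inv]; exact inv_le_one_of_one_le₀ hα)
    have h1 : RfGood (fun z => 1 - α⁻¹ * z) := RfGood.of_sq hs (by fun_prop) (fun z hz => (hs' z hz).1)
    have := (RfGood.const (-α)).mul h1
    convert this using 2 with z
    field_simp
    ring
  · push Not at hα
    obtain ⟨s, hs, hs'⟩ := rf_sqrt ((starRingEnd ℂ) α) (by simpa using hα.le)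
    have hne : ∀ z ∈ closedBall (0:ℂ) 1, 1 - (starRingEnd ℂ) α * z ≠ 0 := by
      intro z hz h
      have hz' : ‖z‖ ≤ 1 := by simpa using hz
      have h2 : ‖(starRingEnd ℂ) α * z‖ = 1 := by rw [← sub_eq_zero.1 h]; simp
      rw [norm_mul, RCLike.norm_conj] at h2
      nlinarith [norm_nonneg z, norm_nonneg α]
    refine ⟨s, fun z => (z - α) / s z, fun z => ‖1 - (starRingEnd ℂ) α * z‖,
      fun z => ‖z - α‖ ^ 2 / ‖1 - (starRingEnd ℂ) α * z‖, hs, ?_, by fun_prop, ?_,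
      fun z hz => ⟨?_, ?_, ?_⟩, fun z hz => ?_⟩
    · exact DifferentiableOn.div (by fun_prop) hs (fun z hz => (hs' z hz).2)
    · exact ContinuousOn.div (by fun_prop) (by fun_prop) (fun z hz => norm_ne_zero_iff.2 (hne z hz))
    · have := (hs' z hz).2
      field_simp
    · simp only [(hs' z hz).1, norm_mul]; ring
    · simp only [(hs' z hz).1, norm_mul, norm_div, div_pow]; ring
    · have hz1 : ‖z‖ = 1 := by simpa using hz
      have hz2 : z * (starRingEnd ℂ) z = 1 := by rw [Complex.mul_conj']; simp [hz1]
      have e : ‖1 - (starRingEnd ℂ) α * z‖ = ‖z - α‖ := by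
        have : 1 - (starRingEnd ℂ) α * z = z * (starRingEnd ℂ) (z - α) := by
          rw [map_sub, mul_sub, hz2]; ring
        rw [this, norm_mul, RCLike.norm_conj, hz1, one_mul]
      have hp := norm_ne_zero_iff.2 (hne z (sphere_subset_closedBall hz))
      refine ⟨e, ?_⟩
      simp only
      rw [e] at hp ⊢
      field_simp

lemma RfGood.poly (P : Polynomial ℂ) : RfGood (fun z => P.eval z) := by
  have h : ∀ m : Multiset ℂ, RfGood (fun z =>
      ((m.map (fun x => Polynomial.X - Polynomial.C x)).prod).eval z) := by
    intro m
    induction m using Multiset.induction with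
    | empty => simpa using RfGood.const 1
    | cons a m ih => simpa using (RfGood.X_sub a).mul ih
  rw [(IsAlgClosed.splits P).eq_prod_roots]
  simpa using (RfGood.const P.leadingCoeff).mul (h P.roots)

lemma rf_mem' (r t : ℝ) (h0 : 0 ≤ r) (h1 : r ≤ 1) :
    (r * Complex.exp (t * Complex.I)) ∈ closedBall (0:ℂ) 1 := by
  simp [Complex.norm_exp_ofReal_mul_I, abs_of_nonneg h0, h1]

lemma rf_mn_tendsto {u : ℂ → ℝ} (hu : ContinuousOn u (closedBall 0 1)) :
    Tendsto (rfMn u) (𝓝[<] 1) (𝓝 (rfMn u 1)) := by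
  obtain ⟨C, hC⟩ := (isCompact_closedBall (0:ℂ) 1).exists_bound_of_continuousOn hu
  have hev : ∀ᶠ r : ℝ in 𝓝[<] 1, 0 ≤ r ∧ r ≤ 1 := by
    filter_upwards [Ioo_mem_nhdsLT (show (0:ℝ) < 1 by norm_num)] with r hr
    exact ⟨hr.1.le, hr.2.le⟩
  refine Tendsto.const_mul _ ?_
  apply intervalIntegral.tendsto_integral_filter_of_dominated_convergence (fun _ => C)
  · filter_upwards [hev] with r hr
    refine Continuous.aestronglyMeasurable ?_
    exact hu.comp_continuous (by fun_prop) (fun t => rf_mem' r t hr.1 hr.2)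
  · filter_upwards [hev] with r hr
    exact Eventually.of_forall fun t _ => hC _ (rf_mem' r t hr.1 hr.2)
  · simp
  · refine Eventually.of_forall fun t _ => ?_
    have := hu _ (rf_mem' 1 t zero_le_one le_rfl)
    refine this.tendsto.comp (tendsto_nhdsWithin_iff.2 ⟨?_, ?_⟩)
    · refine tendsto_nhdsWithin_of_tendsto_nhds ?_
      have : Continuous fun r : ℝ => (r:ℂ) * Complex.exp (t * Complex.I) := by fun_prop
      exact this.tendsto 1
    · filter_upwards [hev] with r hr
      exact rf_mem' r t hr.1 hr.2

lemma rf_bound {a : ℕ → ℂ} {g : ℂ → ℂ} (ha : RfPS a g) {u : ℂ → ℝ}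
    (hu : ContinuousOn u (closedBall 0 1)) (h : ∀ z ∈ ball (0:ℂ) 1, ‖g z‖ ^ 2 = u z) (K : ℕ) :
    ∑ k ∈ Finset.range K, ‖a k‖ ^ 2 ≤ rfMn u 1 := by
  have h1 : Tendsto (fun r : ℝ => ∑ k ∈ Finset.range K, ‖a k‖ ^ 2 * (r ^ k) ^ 2) (𝓝[<] 1)
      (𝓝 (∑ k ∈ Finset.range K, ‖a k‖ ^ 2)) := by
    have : Continuous (fun r : ℝ => ∑ k ∈ Finset.range K, ‖a k‖ ^ 2 * (r ^ k) ^ 2) := by fun_prop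
    simpa using tendsto_nhdsWithin_of_tendsto_nhds (s := Set.Iio 1) (this.tendsto 1)
  refine le_of_tendsto_of_tendsto h1 (rf_mn_tendsto hu) ?_
  filter_upwards [Ioo_mem_nhdsLT (show (0:ℝ) < 1 by norm_num)] with r hr
  have h2 := ha.parseval hr.1.le hr.2
  have h3 : rfMn (fun z => ‖g z‖ ^ 2) r = rfMn u r := by
    unfold rfMn
    congr 1
    apply intervalIntegral.integral_congr
    intro t _
    exact h _ (rf_mem r t hr.1.le hr.2)
  rw [h3] at h2
  exact sum_le_hasSum _ (fun k _ => by positivity) h2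

lemma rf_mn_congr_one {u w : ℂ → ℝ} (h : ∀ z ∈ sphere (0:ℂ) 1, u z = w z) : rfMn u 1 = rfMn w 1 := by
  unfold rfMn
  congr 1
  apply intervalIntegral.integral_congr
  intro t _
  exact h _ (by simp [Complex.norm_exp_ofReal_mul_I])

lemma RfGood.toS {F c} (hF : RfGood F) (hc : RfPS c F) : RfS c (rfMn (fun z => ‖F z‖) 1) := by
  obtain ⟨g, h, u, v, h1, h2, h3, h4, h5, h6⟩ := hF
  obtain ⟨a, ha⟩ := RfPS.of_diff h1
  obtain ⟨b, hb⟩ := RfPS.of_diff h2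
  refine ⟨a, b, fun K => ?_, fun K => ?_, fun k => ?_⟩
  · rw [← rf_mn_congr_one (fun z hz => (h6 z hz).1)]
    exact rf_bound ha h3 (fun z hz => (h5 z hz).2.1) K
  · rw [← rf_mn_congr_one (fun z hz => (h6 z hz).2)]
    exact rf_bound hb h4 (fun z hz => (h5 z hz).2.2) K
  · have : RfPS c (fun z => g z * h z) := fun z hz => by
      have := hc z hz
      rwa [(h5 z hz).1] at this
    exact congrFun (this.unique (ha.mul hb)) k

lemma RfS.mono {c M N} (h : RfS c M) (hMN : M ≤ N) : RfS c N := by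
  obtain ⟨a, b, h1, h2, h3⟩ := h
  exact ⟨a, b, fun K => (h1 K).trans hMN, fun K => (h2 K).trans hMN, h3⟩

/-- approximation by polynomials -/
lemma rf_approx {f : ℂ → ℂ} {c : ℕ → ℂ} (hf : DifferentiableOn ℂ f (ball 0 1)) (hc : RfPS c f) {M : ℝ}
    (hM : ∀ r : ℝ, 0 < r → r < 1 → rfMn (fun z => ‖f z‖) r ≤ M) {r ε : ℝ} (h0 : 0 < r) (h1 : r < 1)
    (hε : 0 < ε) (n : ℕ) :
    ∃ d, RfS d (M + ε) ∧ ∀ k < n, d k = c k * (r:ℂ) ^ k := by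
  have hs := hc.summable h0.le h1
  have ht := tendsto_sum_nat_add (fun k => ‖c k * (r:ℂ) ^ k‖)
  obtain ⟨N, hN, hnN⟩ := ((ht.eventually (gt_mem_nhds hε)).and (eventually_ge_atTop n)).exists
  let d : ℕ → ℂ := fun k => if k < N then c k * (r:ℂ) ^ k else 0
  let P : Polynomial ℂ := ∑ k ∈ Finset.range N, Polynomial.monomial k (c k * (r:ℂ) ^ k)
  have hP : ∀ z, P.eval z = ∑ k ∈ Finset.range N, c k * (r:ℂ) ^ k * z ^ k := by
    intro z; simp [P, Polynomial.eval_finsetSum]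
  have hd : RfPS d (fun z => P.eval z) := by
    intro z _
    simp only [hP]
    have : ∑ k ∈ Finset.range N, c k * (r:ℂ) ^ k * z ^ k = ∑ k ∈ Finset.range N, d k * z ^ k :=
      Finset.sum_congr rfl fun k hk => by simp [d, Finset.mem_range.1 hk]
    rw [this]
    apply hasSum_sum_of_ne_finset_zero
    intro k hk
    simp only [Finset.mem_range] at hk
    simp [d, hk]
  refine ⟨d, ((RfGood.poly P).toS hd).mono ?_, fun k hk => by simp [d, hk.trans_le hnN]⟩
  have hpt : ∀ t : ℝ, ‖P.eval (((1:ℝ):ℂ) * Complex.exp (t * Complex.I))‖ ≤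
      ‖f (r * Complex.exp (t * Complex.I))‖ + ε := by
    intro t
    set w := Complex.exp (t * Complex.I) with hw
    have hw1 : ‖w‖ = 1 := Complex.norm_exp_ofReal_mul_I t
    have hfs := hc _ (rf_mem r t h0.le h1)
    have e := hfs.summable.sum_add_tsum_nat_add N
    rw [hfs.tsum_eq] at e
    have e2 : P.eval (((1:ℝ):ℂ) * w) = ∑ k ∈ Finset.range N, c k * ((r:ℂ) * w) ^ k := by
      rw [hP]
      refine Finset.sum_congr rfl fun k _ => ?_
      rw [mul_pow]; simp; ring
    have e3 : ∀ k, ‖c k * ((r:ℂ) * w) ^ k‖ = ‖c k * (r:ℂ) ^ k‖ := by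
      intro k; rw [mul_pow, ← mul_assoc, norm_mul, norm_pow w, hw1]; simp
    have e4 : ‖∑' k, c (k + N) * ((r:ℂ) * w) ^ (k + N)‖ ≤ ε := by
      refine (norm_tsum_le_tsum_norm ?_).trans ?_
      · simp_rw [e3]; exact (summable_nat_add_iff N).2 hs
      · simp_rw [e3]; exact hN.le
    have e5 : P.eval (((1:ℝ):ℂ) * w) = f (r * w) - ∑' k, c (k + N) * ((r:ℂ) * w) ^ (k + N) := by
      rw [e2, ← e]; ring
    rw [e5]
    exact (norm_sub_le _ _).trans (by linarith)
  have hcont : Continuous fun t : ℝ => ‖f (r * Complex.exp (t * Complex.I))‖ :=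
    (hf.continuousOn.comp_continuous (by fun_prop) (fun t => rf_mem r t h0.le h1)).norm
  have hint : ∫ t in (0:ℝ)..(2*Real.pi), ‖P.eval (((1:ℝ):ℂ) * Complex.exp (t * Complex.I))‖ ≤
      ∫ t in (0:ℝ)..(2*Real.pi), (‖f (r * Complex.exp (t * Complex.I))‖ + ε) := by
    apply intervalIntegral.integral_mono_on (by positivity)
    · exact (P.continuous.comp (by fun_prop)).norm.intervalIntegrable _ _
    · exact (hcont.add continuous_const).intervalIntegrable _ _
    · exact fun t _ => hpt t
  rw [intervalIntegral.integral_add (hcont.intervalIntegrable _ _) (by simp),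
    intervalIntegral.integral_const] at hint
  have hMr := hM r h0 h1
  have hpi := Real.pi_pos
  unfold rfMn at hMr ⊢
  have := mul_le_mul_of_nonneg_left hint (show 0 ≤ 1 / (2 * Real.pi) by positivity)
  refine this.trans ?_
  rw [mul_add]
  have e : 1 / (2 * Real.pi) * ((2 * Real.pi - 0) • ε) = ε := by
    simp only [smul_eq_mul, sub_zero]; field_simp
  rw [e]
  linarith

lemma rf_S {f : ℂ → ℂ} {c : ℕ → ℂ} (hf : DifferentiableOn ℂ f (ball 0 1)) (hc : RfPS c f) {M : ℝ}
    (hM : ∀ r : ℝ, 0 < r → r < 1 → rfMn (fun z => ‖f z‖) r ≤ M) : RfS c M := by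
  let r : ℕ → ℝ := fun n => 1 - 1 / ((n:ℝ) + 2)
  have hr0 : ∀ n, 0 < r n := by
    intro n
    have : 1 / ((n:ℝ) + 2) < 1 := by
      rw [div_lt_one (by positivity)]; linarith [Nat.cast_nonneg (α := ℝ) n]
    simp only [r]; linarith
  have hr1 : ∀ n, r n < 1 := by
    intro n
    have : 0 < 1 / ((n:ℝ) + 2) := by positivity
    simp only [r]; linarith
  have hz : Tendsto (fun n : ℕ => 1 / ((n:ℝ) + 2)) atTop (𝓝 0) :=
    Tendsto.const_div_atTop (tendsto_atTop_add_const_right _ _ tendsto_natCast_atTop_atTop) 1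
  have hr : Tendsto r atTop (𝓝 1) := by
    have := hz.const_sub 1
    rwa [sub_zero] at this
  choose d hd hdk using fun n : ℕ => rf_approx hf hc hM (hr0 n) (hr1 n)
    (show 0 < 1 / ((n:ℝ) + 2) by positivity) n
  refine rf_limit d c (fun n => M + 1 / ((n:ℝ) + 2)) M (fun k => ?_) (by simpa using hz.const_add M) hd
  have : Tendsto (fun n => c k * (r n : ℂ) ^ k) atTop (𝓝 (c k)) := by
    have h1 : Tendsto (fun n => (r n : ℂ)) atTop (𝓝 ((1:ℝ):ℂ)) :=
      (Complex.continuous_ofReal.tendsto 1).comp hr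
    simpa using (h1.pow k).const_mul (c k)
  refine this.congr' ?_
  filter_upwards [eventually_gt_atTop k] with n hn
  exact (hdk n k hn).symm

lemma rf_build {a : ℕ → ℂ} {M : ℝ} (h : ∀ K, ∑ k ∈ Finset.range K, ‖a k‖ ^ 2 ≤ M) :
    ∃ g, DifferentiableOn ℂ g (ball 0 1) ∧ RfPS a g ∧
      ∀ r : ℝ, 0 < r → r < 1 → rfMn (fun z => ‖g z‖ ^ 2) r ≤ M := by
  have hb : ∀ k, ‖a k‖ ≤ Real.sqrt M := by
    intro k
    apply Real.le_sqrt_of_sq_le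
    refine le_trans ?_ (h (k+1))
    exact Finset.single_le_sum (f := fun k => ‖a k‖ ^ 2) (fun _ _ => by positivity) (by simp)
  have hn : ∀ (ρ : ℝ) (z : ℂ) (k : ℕ), ‖z‖ ≤ ρ → ‖a k * z ^ k‖ ≤ Real.sqrt M * ρ ^ k := by
    intro ρ z k hz
    rw [norm_mul, norm_pow]
    gcongr
    exact hb k
  have hg : ∀ ρ : ℝ, 0 ≤ ρ → ρ < 1 → Summable fun k : ℕ => Real.sqrt M * ρ ^ k := fun ρ h0 h1 =>
    (summable_geometric_of_lt_one h0 h1).mul_left _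
  have hps : RfPS a (fun z => ∑' k, a k * z ^ k) := by
    intro z hz
    have hz' : ‖z‖ < 1 := by simpa using hz
    exact (Summable.of_norm_bounded (hg _ (norm_nonneg z) hz') (fun k => hn _ z k le_rfl)).hasSum
  refine ⟨fun z => ∑' k, a k * z ^ k, ?_, hps, fun r h0 h1 => ?_⟩
  · intro z hz
    have hz' : ‖z‖ < 1 := by simpa using hz
    obtain ⟨ρ, h1, h2⟩ := exists_between hz'
    have := Complex.differentiableOn_tsum_of_summable_norm (U := ball (0:ℂ) ρ)
      (F := fun k z => a k * z ^ k) (hg ρ ((norm_nonneg z).trans h1.le) h2) (fun k => by fun_prop) isOpen_ball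
      (fun k w hw => hn ρ w k (by simpa using (mem_ball_zero_iff.1 hw).le))
    exact (this.differentiableAt (isOpen_ball.mem_nhds (by simpa using h1))).differentiableWithinAt
  · have h2 := hps.parseval h0.le h1
    refine le_of_tendsto' h2.tendsto_sum_nat fun K => le_trans ?_ (h K)
    refine Finset.sum_le_sum fun k _ => ?_
    refine mul_le_of_le_one_right (by positivity) ?_
    exact pow_le_one₀ (by positivity) (pow_le_one₀ h0.le h1.le)

lemma rf_hardy1 (f : ℂ → ℂ) (r : ℝ) : hardyMean 1 f r = rfMn (fun z => ‖f z‖) r := by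
  simp [hardyMean, rfMn]

lemma rf_mn_nonneg {u : ℂ → ℝ} (hu : ∀ z, 0 ≤ u z) (r : ℝ) : 0 ≤ rfMn u r := by
  have := Real.pi_pos
  unfold rfMn
  refine mul_nonneg (by positivity) ?_
  exact intervalIntegral.integral_nonneg (by positivity) (fun t _ => hu _)

lemma rf_hardy2 (f : ℂ → ℂ) (r : ℝ) :
    hardyMean 2 f r = Real.sqrt (rfMn (fun z => ‖f z‖ ^ 2) r) := by
  rw [Real.sqrt_eq_rpow]
  simp only [hardyMean, rfMn]
  norm_cast

lemma rf_h2 {g : ℂ → ℂ} {M : ℝ} (hd : DifferentiableOn ℂ g (ball 0 1))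
    (h : ∀ r : ℝ, 0 < r → r < 1 → rfMn (fun z => ‖g z‖ ^ 2) r ≤ M) (hM0 : 0 ≤ M) :
    MemHp 2 g ∧ hpNorm 2 g ^ 2 ≤ M ∧
      ∀ r : ℝ, 0 < r → r < 1 → rfMn (fun z => ‖g z‖ ^ 2) r ≤ hpNorm 2 g ^ 2 := by
  have hle : ∀ r : Set.Ioo (0:ℝ) 1, hardyMean 2 g r ≤ Real.sqrt M := fun r => by
    rw [rf_hardy2]; exact Real.sqrt_le_sqrt (h r r.2.1 r.2.2)
  have hbdd : BddAbove (Set.range fun r : Set.Ioo (0:ℝ) 1 => hardyMean 2 g r) :=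
    ⟨Real.sqrt M, by rintro _ ⟨r, rfl⟩; exact hle r⟩
  have : Nonempty (Set.Ioo (0:ℝ) 1) := ⟨⟨1/2, by norm_num, by norm_num⟩⟩
  have hnn : 0 ≤ hpNorm 2 g := Real.iSup_nonneg fun r => by rw [rf_hardy2]; positivity
  refine ⟨⟨hd, hbdd⟩, ?_, fun r h0 h1 => ?_⟩
  · have : hpNorm 2 g ≤ Real.sqrt M := ciSup_le hle
    calc hpNorm 2 g ^ 2 ≤ Real.sqrt M ^ 2 := by gcongr
      _ = M := Real.sq_sqrt hM0
  · have h2 : hardyMean 2 g r ≤ hpNorm 2 g := le_ciSup hbdd ⟨r, h0, h1⟩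
    rw [rf_hardy2] at h2
    exact (Real.sqrt_le_left hnn).1 h2

/-- Riesz factorization: every `f ∈ H¹` factors as `f = g * h` with
`g, h ∈ H²` and `‖g‖_{H²}² = ‖h‖_{H²}² = ‖f‖_{H¹}`. -/
theorem riesz_factorization (f : ℂ → ℂ) (hf : MemHp 1 f) :
    ∃ g h : ℂ → ℂ, MemHp 2 g ∧ MemHp 2 h ∧
      (∀ z ∈ ball (0:ℂ) 1, f z = g z * h z) ∧
      hpNorm 2 g ^ 2 = hpNorm 1 f ∧ hpNorm 2 h ^ 2 = hpNorm 1 f := by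
  obtain ⟨hd, hb⟩ := hf
  have : Nonempty (Set.Ioo (0:ℝ) 1) := ⟨⟨1/2, by norm_num, by norm_num⟩⟩
  have hM : ∀ r : ℝ, 0 < r → r < 1 → rfMn (fun z => ‖f z‖) r ≤ hpNorm 1 f := fun r h0 h1 => by
    have := le_ciSup hb ⟨r, h0, h1⟩
    simp only [rf_hardy1] at this
    simpa only [hpNorm, rf_hardy1] using this
  have hM0 : 0 ≤ hpNorm 1 f := Real.iSup_nonneg fun r => by
    rw [rf_hardy1]; exact rf_mn_nonneg (fun z => norm_nonneg _) _
  obtain ⟨c, hc⟩ := RfPS.of_diff hd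
  obtain ⟨a, b, ha, hb', hab⟩ := rf_S hd hc hM
  obtain ⟨g, hg1, hg2, hg3⟩ := rf_build ha
  obtain ⟨h, hh1, hh2, hh3⟩ := rf_build hb'
  obtain ⟨G1, G2, G3⟩ := rf_h2 hg1 hg3 hM0
  obtain ⟨H1, H2, H3⟩ := rf_h2 hh1 hh3 hM0
  have hfac : ∀ z ∈ ball (0:ℂ) 1, f z = g z * h z := by
    intro z hz
    have h1 := (hg2.mul hh2) z hz
    simp only [← hab] at h1
    exact (hc z hz).unique h1
  have key : hpNorm 1 f ≤ (hpNorm 2 g ^ 2 + hpNorm 2 h ^ 2) / 2 := by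
    refine ciSup_le fun r => ?_
    rw [rf_hardy1]
    have h0 := r.2.1
    have h1 := r.2.2
    have hcg : Continuous fun t : ℝ => ‖g ((r:ℝ) * Complex.exp (t * Complex.I))‖ ^ 2 :=
      (hg1.continuousOn.comp_continuous (by fun_prop) (fun t => rf_mem r t h0.le h1)).norm.pow 2
    have hch : Continuous fun t : ℝ => ‖h ((r:ℝ) * Complex.exp (t * Complex.I))‖ ^ 2 :=
      (hh1.continuousOn.comp_continuous (by fun_prop) (fun t => rf_mem r t h0.le h1)).norm.pow 2
    have hcf : Continuous fun t : ℝ => ‖f ((r:ℝ) * Complex.exp (t * Complex.I))‖ :=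
      (hd.continuousOn.comp_continuous (by fun_prop) (fun t => rf_mem r t h0.le h1)).norm
    have hint : ∫ t in (0:ℝ)..(2*Real.pi), ‖f ((r:ℝ) * Complex.exp (t * Complex.I))‖ ≤
        ∫ t in (0:ℝ)..(2*Real.pi), (‖g ((r:ℝ) * Complex.exp (t * Complex.I))‖ ^ 2
          + ‖h ((r:ℝ) * Complex.exp (t * Complex.I))‖ ^ 2) / 2 := by
      apply intervalIntegral.integral_mono_on (by positivity)
      · exact hcf.intervalIntegrable _ _
      · exact ((hcg.add hch).div_const 2).intervalIntegrable _ _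
      · intro t _
        rw [hfac _ (rf_mem r t h0.le h1), norm_mul]
        nlinarith [sq_nonneg (‖g ((r:ℝ) * Complex.exp (t * Complex.I))‖
          - ‖h ((r:ℝ) * Complex.exp (t * Complex.I))‖)]
    rw [intervalIntegral.integral_div, intervalIntegral.integral_add (hcg.intervalIntegrable _ _)
      (hch.intervalIntegrable _ _)] at hint
    have hg4 := G3 r h0 h1
    have hh4 := H3 r h0 h1
    have hpi := Real.pi_pos
    unfold rfMn at hg4 hh4 ⊢
    have := mul_le_mul_of_nonneg_left hint (show 0 ≤ 1 / (2 * Real.pi) by positivity)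
    linarith
  exact ⟨g, h, G1, H1, hfac, by linarith, by linarith⟩
end

section
/- (Calderón's theorem, one direction) Let f, g be measurable functions on a σ-finite measure space with ∫₀^t g*(s) ds ≤ ∫₀^t f*(s) ds for all t > 0 (i.e., K(t,g) ≤ K(t,f) for the couple (L¹,L^∞)). Then there exists a linear operator T, simultaneously contractive on L¹ and on L^∞, with Tf = g. Conversely, if T is bounded on L¹ and on L^∞ with norms ≤ 1, then ∫₀^t (Tf)*(s) ds ≤ ∫₀^t f*(s) ds for all t. -/
open MeasureTheory
open scoped ENNReal

/-- The decreasing rearrangement `f*(s) = inf {λ : μ{|f| > λ} ≤ s}`. -/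
noncomputable def decRearr {α : Type*} [MeasurableSpace α] (μ : Measure α)
    (f : α → ℝ) (s : ℝ) : ℝ≥0∞ :=
  sInf {l : ℝ≥0∞ | μ {x | l < (‖f x‖₊ : ℝ≥0∞)} ≤ ENNReal.ofReal s}

lemma cz_vol (a : ℝ≥0∞) (c : ℝ) (hc : 0 ≤ c) :
    ∫⁻ l in Set.Ioi c, (Set.indicator {l : ℝ | ENNReal.ofReal l < a} (fun _ => (1:ℝ≥0∞)) l)
      = a - ENNReal.ofReal c := by
  have hm : MeasurableSet {l : ℝ | ENNReal.ofReal l < a} :=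
    measurableSet_lt ENNReal.measurable_ofReal measurable_const
  rw [lintegral_indicator hm, Measure.restrict_restrict hm]
  simp only [lintegral_const, MeasurableSet.univ, Measure.restrict_apply, Set.univ_inter, one_mul]
  by_cases ha : a = ⊤
  · subst ha
    have : {l : ℝ | ENNReal.ofReal l < ⊤} ∩ Set.Ioi c = Set.Ioi c := by
      ext x; simp
    rw [this]; simp
  · have : {l : ℝ | ENNReal.ofReal l < a} ∩ Set.Ioi c = Set.Ioo c a.toReal := by
      ext x
      simp only [Set.mem_inter_iff, Set.mem_ofPred_eq, Set.mem_Ioi, Set.mem_Ioo]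
      constructor
      · rintro ⟨h1, h2⟩
        exact ⟨h2, (ENNReal.ofReal_lt_iff_lt_toReal (hc.trans h2.le) ha).1 h1⟩
      · rintro ⟨h2, h1⟩
        exact ⟨(ENNReal.ofReal_lt_iff_lt_toReal (hc.trans h2.le) ha).2 h1, h2⟩
    rw [this, Real.volume_Ioo, ENNReal.ofReal_sub _ hc, ENNReal.ofReal_toReal ha]

/-- Layer cake formula, above level `c`. -/
lemma cz_layer {α : Type*} [MeasurableSpace α] (ν : Measure α) [SFinite ν]
    {φ : α → ℝ≥0∞} (hφ : Measurable φ) (c : ℝ) (hc : 0 ≤ c) :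
    ∫⁻ x, (φ x - ENNReal.ofReal c) ∂ν
      = ∫⁻ l in Set.Ioi c, ν {x | ENNReal.ofReal l < φ x} := by
  simp_rw [← fun x => cz_vol (φ x) c hc]
  rw [lintegral_lintegral_swap]
  · refine lintegral_congr fun l => ?_
    have : (fun x => Set.indicator {l : ℝ | ENNReal.ofReal l < φ x} (fun _ => (1:ℝ≥0∞)) l)
        = Set.indicator {x | ENNReal.ofReal l < φ x} (fun _ => 1) := by
      ext x; simp [Set.indicator]
    rw [this, lintegral_indicator_const (measurableSet_lt measurable_const hφ), one_mul]
  · have : (Function.uncurry fun x l =>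
        Set.indicator {l : ℝ | ENNReal.ofReal l < φ x} (fun _ => (1:ℝ≥0∞)) l)
        = Set.indicator {p : α × ℝ | ENNReal.ofReal p.2 < φ p.1} (fun _ => 1) := by
      ext ⟨x, l⟩; simp [Set.indicator]
    rw [this]
    exact (measurable_const.indicator (measurableSet_lt
      (ENNReal.measurable_ofReal.comp measurable_snd) (hφ.comp measurable_fst))).aemeasurable

lemma cz_layer0 {α : Type*} [MeasurableSpace α] (ν : Measure α) [SFinite ν]
    {φ : α → ℝ≥0∞} (hφ : Measurable φ) :
    ∫⁻ x, φ x ∂ν = ∫⁻ l in Set.Ioi (0:ℝ), ν {x | ENNReal.ofReal l < φ x} := by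
  rw [← cz_layer ν hφ 0 le_rfl]; simp

/-- The K-functional in terms of the distribution function. -/
noncomputable def czK {α : Type*} [MeasurableSpace α] (μ : Measure α)
    (f : α → ℝ) (t : ℝ≥0∞) : ℝ≥0∞ :=
  ∫⁻ l in Set.Ioi (0:ℝ), min t (μ {x | ENNReal.ofReal l < (‖f x‖₊ : ℝ≥0∞)})

lemma cz_lt_decRearr_iff {α : Type*} [MeasurableSpace α] (μ : Measure α)
    (f : α → ℝ) (s : ℝ) (l : ℝ≥0∞) :
    l < decRearr μ f s ↔ ENNReal.ofReal s < μ {x | l < (‖f x‖₊ : ℝ≥0∞)} := by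
  rw [← not_iff_not, not_lt, not_lt]
  constructor
  · intro h
    by_cases hl : l = ⊤
    · subst hl; simp
    obtain ⟨u, hu_anti, hu_gt, hu_lim⟩ := exists_seq_strictAnti_tendsto' (lt_top_iff_ne_top.2 hl)
    have hset : {x | l < (‖f x‖₊ : ℝ≥0∞)} = ⋃ n, {x | u n < (‖f x‖₊ : ℝ≥0∞)} := by
      ext x
      simp only [Set.mem_ofPred_eq, Set.mem_iUnion]
      constructor
      · intro hx
        exact ((hu_lim.eventually (gt_mem_nhds hx)).exists)
      · rintro ⟨n, hn⟩
        exact (hu_gt n).1.trans hn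
    rw [hset, Monotone.measure_iUnion]
    · refine iSup_le fun n => ?_
      have h1 : decRearr μ f s < u n := lt_of_le_of_lt h (hu_gt n).1
      obtain ⟨b, hb, hbu⟩ := sInf_lt_iff.1 h1
      refine le_trans (measure_mono ?_) hb
      intro x hx
      exact hbu.trans hx
    · intro m n hmn x hx
      exact lt_of_le_of_lt (hu_anti.antitone hmn) hx
  · intro h
    exact sInf_le h

lemma cz_decRearr_anti {α : Type*} [MeasurableSpace α] (μ : Measure α)
    (f : α → ℝ) : Antitone (decRearr μ f) := by
  intro s t h
  refine sInf_le_sInf fun l hl => ?_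
  exact le_trans hl (ENNReal.ofReal_le_ofReal h)

lemma cz_K_eq {α : Type*} [MeasurableSpace α] (μ : Measure α)
    (f : α → ℝ) (t : ℝ) (ht : 0 ≤ t) :
    ∫⁻ s in Set.Ioc (0:ℝ) t, decRearr μ f s = czK μ f (ENNReal.ofReal t) := by
  rw [cz_layer0 _ (cz_decRearr_anti μ f).measurable, czK]
  refine setLIntegral_congr_fun measurableSet_Ioi fun l _ => ?_
  simp only [cz_lt_decRearr_iff]
  set D := μ {x | ENNReal.ofReal l < (‖f x‖₊ : ℝ≥0∞)}
  have hm : MeasurableSet {s : ℝ | ENNReal.ofReal s < D} :=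
    measurableSet_lt ENNReal.measurable_ofReal measurable_const
  rw [Measure.restrict_apply hm]
  by_cases hD : D = ⊤
  · have : {s : ℝ | ENNReal.ofReal s < D} ∩ Set.Ioc 0 t = Set.Ioc 0 t := by
      ext x; simp [hD]
    rw [this, hD]; simp
  · rcases le_or_gt (ENNReal.ofReal t) D with h | h
    · have : volume ({s : ℝ | ENNReal.ofReal s < D} ∩ Set.Ioc 0 t) = volume (Set.Ioo 0 t) := by
        apply le_antisymm
        · rw [Real.volume_Ioo, ← Real.volume_Ioc]
          exact measure_mono Set.inter_subset_right
        · refine measure_mono fun x hx => ⟨?_, hx.1, hx.2.le⟩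
          exact lt_of_lt_of_le ((ENNReal.ofReal_lt_ofReal_iff (hx.1.trans hx.2)).2 hx.2) h
      rw [this, min_eq_left h]; simp
    · have : {s : ℝ | ENNReal.ofReal s < D} ∩ Set.Ioc 0 t = Set.Ioo 0 D.toReal := by
        ext x
        simp only [Set.mem_inter_iff, Set.mem_ofPred_eq, Set.mem_Ioc, Set.mem_Ioo]
        constructor
        · rintro ⟨h1, h2, h3⟩
          exact ⟨h2, (ENNReal.ofReal_lt_iff_lt_toReal h2.le hD).1 h1⟩
        · rintro ⟨h2, h1⟩
          refine ⟨(ENNReal.ofReal_lt_iff_lt_toReal h2.le hD).2 h1, h2, h1.le.trans ?_⟩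
          exact ENNReal.toReal_le_of_le_ofReal ht h.le
      rw [this, min_eq_right h.le, Real.volume_Ioo, sub_zero, ENNReal.ofReal_toReal hD]

lemma cz_K_le_add {α : Type*} [MeasurableSpace α] (μ : Measure α) [SigmaFinite μ]
    {f a b : α → ℝ} (hf : Measurable f) (h : ∀ᵐ x ∂μ, f x = a x + b x) (t : ℝ≥0∞) :
    czK μ f t ≤ eLpNorm a 1 μ + t * eLpNorm b ⊤ μ := by
  by_cases ht : t = 0
  · subst ht; simp [czK]
  set M := eLpNorm b ⊤ μ with hM
  by_cases hMt : M = ⊤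
  · rw [hMt, ENNReal.mul_top ht]; simp
  have hb : ∀ᵐ x ∂μ, ‖b x‖ₑ ≤ M := by
    rw [hM, eLpNorm_exponent_top]; exact ae_le_eLpNormEssSup
  have hφ : Measurable (fun x => (‖f x‖₊ : ℝ≥0∞)) := by fun_prop
  have h0 : (0:ℝ) ≤ M.toReal := ENNReal.toReal_nonneg
  unfold czK
  rw [← Set.Ioc_union_Ioi_eq_Ioi h0, add_comm]
  refine (lintegral_union_le _ _ _).trans (add_le_add ?_ ?_)
  · calc _ ≤ ∫⁻ l in Set.Ioc 0 M.toReal, t := lintegral_mono fun l => min_le_left _ _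
      _ = _ := by simp [ENNReal.ofReal_toReal hMt]
  · calc _ ≤ ∫⁻ l in Set.Ioi M.toReal, μ {x | ENNReal.ofReal l < (‖f x‖₊ : ℝ≥0∞)} :=
          lintegral_mono fun l => min_le_right _ _
      _ = ∫⁻ x, ((‖f x‖₊ : ℝ≥0∞) - ENNReal.ofReal M.toReal) ∂μ := (cz_layer μ hφ _ h0).symm
      _ ≤ ∫⁻ x, ‖a x‖ₑ ∂μ := by
          refine lintegral_mono_ae ?_
          filter_upwards [h, hb] with x hx hbx
          rw [ENNReal.ofReal_toReal hMt, tsub_le_iff_right, hx]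
          exact (enorm_add_le _ _).trans (add_le_add le_rfl hbx)
      _ = _ := by rw [eLpNorm_one_eq_lintegral_enorm]

lemma cz_K_decomp {α : Type*} [MeasurableSpace α] (μ : Measure α) [SigmaFinite μ]
    {f : α → ℝ} (hf : Measurable f) (t : ℝ) (ht : 0 < t)
    (hfin : czK μ f (ENNReal.ofReal t) ≠ ⊤) :
    ∃ a b : α → ℝ, Measurable a ∧ Measurable b ∧ (∀ x, f x = a x + b x) ∧
      eLpNorm a 1 μ + ENNReal.ofReal t * eLpNorm b ⊤ μ ≤ czK μ f (ENNReal.ofReal t) := by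
  set lam := decRearr μ f t with hlam
  have hlt : ∀ l : ℝ≥0∞, l < lam ↔ ENNReal.ofReal t < μ {x | l < (‖f x‖₊ : ℝ≥0∞)} :=
    cz_lt_decRearr_iff μ f t
  have hφ : Measurable (fun x => (‖f x‖₊ : ℝ≥0∞)) := by fun_prop
  by_cases htop : lam = ⊤
  · exfalso; apply hfin
    unfold czK
    have : ∀ l : ℝ, min (ENNReal.ofReal t) (μ {x | ENNReal.ofReal l < (‖f x‖₊ : ℝ≥0∞)})
        = ENNReal.ofReal t := by
      intro l
      refine min_eq_left ((hlt _).1 ?_).le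
      rw [htop]; exact ENNReal.ofReal_lt_top
    simp_rw [this]
    simp [ENNReal.mul_top, ht]
  set L := lam.toReal with hL
  have hL0 : 0 ≤ L := ENNReal.toReal_nonneg
  have hLlam : ENNReal.ofReal L = lam := ENNReal.ofReal_toReal htop
  have hbm : Measurable (fun x => max (-L) (min L (f x))) := by fun_prop
  refine ⟨fun x => f x - max (-L) (min L (f x)), fun x => max (-L) (min L (f x)),
    hf.sub hbm, hbm, fun x => by ring, ?_⟩
  have hb : eLpNorm (fun x => max (-L) (min L (f x))) ⊤ μ ≤ lam := by
    rw [eLpNorm_exponent_top, ← hLlam]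
    refine eLpNormEssSup_le_of_ae_bound (Filter.Eventually.of_forall fun x => ?_)
    rw [Real.norm_eq_abs, abs_le]
    exact ⟨le_max_left _ _, max_le (by linarith) (min_le_left _ _)⟩
  have ha : eLpNorm (fun x => f x - max (-L) (min L (f x))) 1 μ
      = ∫⁻ x, ((‖f x‖₊ : ℝ≥0∞) - ENNReal.ofReal L) ∂μ := by
    rw [eLpNorm_one_eq_lintegral_enorm]
    refine lintegral_congr fun x => ?_
    have : (‖f x‖₊ : ℝ≥0∞) = ENNReal.ofReal |f x| := by
      rw [← Real.norm_eq_abs, ofReal_norm]; rfl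
    rw [this, ← ENNReal.ofReal_sub _ hL0, ← ofReal_norm, Real.norm_eq_abs]
    rcases le_or_gt |f x| L with h | h
    · rw [abs_le] at h
      rw [min_eq_right h.2, max_eq_right h.1]
      simp [abs_le.2 h]
    · rcases lt_abs.1 h with h' | h'
      · rw [min_eq_left h'.le, max_eq_right (by linarith), abs_of_nonneg (by linarith),
          abs_of_nonneg (by linarith)]
      · rw [min_eq_right (by linarith), max_eq_left (by linarith), abs_of_nonpos (by linarith),
          abs_of_nonpos (by linarith)]
        congr 1; ring
  rw [ha, cz_layer μ hφ L hL0]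
  unfold czK
  rw [← Set.Ioc_union_Ioi_eq_Ioi hL0, lintegral_union measurableSet_Ioi
    (Set.Ioc_disjoint_Ioi le_rfl), add_comm]
  refine add_le_add ?_ ?_
  · calc _ ≤ ENNReal.ofReal t * lam := by gcongr
      _ = ∫⁻ l in Set.Ioo 0 L, ENNReal.ofReal t := by simp [hLlam]
      _ ≤ ∫⁻ l in Set.Ioo 0 L, min (ENNReal.ofReal t)
            (μ {x | ENNReal.ofReal l < (‖f x‖₊ : ℝ≥0∞)}) := by
          refine setLIntegral_mono' measurableSet_Ioo fun l hl => ?_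
          refine le_min le_rfl ((hlt _).1 ?_).le
          rw [← hLlam]
          exact (ENNReal.ofReal_lt_ofReal_iff (hl.1.trans hl.2)).2 hl.2
      _ ≤ _ := lintegral_mono_set Set.Ioo_subset_Ioc_self
  · refine setLIntegral_mono' measurableSet_Ioi fun l hl => ?_
    refine le_min ?_ le_rfl
    by_contra hcon
    push Not at hcon
    have := (hlt _).2 hcon
    rw [← hLlam] at this
    exact absurd (ENNReal.ofReal_le_ofReal (le_of_lt hl)) (not_le.2 this)

lemma cz_converse {α : Type*} [MeasurableSpace α] (μ : Measure α) [SigmaFinite μ]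
    (T : (α →ₘ[μ] ℝ) →ₗ[ℝ] (α →ₘ[μ] ℝ))
    (h1 : ∀ u : α →ₘ[μ] ℝ, eLpNorm ((T u : α →ₘ[μ] ℝ) : α → ℝ) 1 μ ≤
        eLpNorm (u : α → ℝ) 1 μ)
    (h2 : ∀ u : α →ₘ[μ] ℝ, eLpNorm ((T u : α →ₘ[μ] ℝ) : α → ℝ) ⊤ μ ≤
        eLpNorm (u : α → ℝ) ⊤ μ)
    (f : α →ₘ[μ] ℝ) (t : ℝ) (ht : 0 < t) :
        ∫⁻ s in Set.Ioc (0:ℝ) t, decRearr μ ((T f : α →ₘ[μ] ℝ) : α → ℝ) s ≤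
          ∫⁻ s in Set.Ioc (0:ℝ) t, decRearr μ (f : α → ℝ) s := by
  rw [cz_K_eq μ _ t ht.le, cz_K_eq μ _ t ht.le]
  by_cases hfin : czK μ f (ENNReal.ofReal t) = ⊤
  · rw [hfin]; exact le_top
  obtain ⟨a, b, ha, hb, hab, hle⟩ := cz_K_decomp μ f.measurable t ht hfin
  refine le_trans ?_ hle
  set A : α →ₘ[μ] ℝ := AEEqFun.mk a ha.aestronglyMeasurable with hA
  set B : α →ₘ[μ] ℝ := AEEqFun.mk b hb.aestronglyMeasurable with hB
  have hfAB : f = A + B := by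
    apply AEEqFun.ext
    filter_upwards [AEEqFun.coeFn_add A B, AEEqFun.coeFn_mk a ha.aestronglyMeasurable,
      AEEqFun.coeFn_mk b hb.aestronglyMeasurable] with x h1 h2 h3
    rw [h1, Pi.add_apply, h2, h3, hab]
  have := cz_K_le_add μ (T f).measurable (a := T A) (b := T B) (by
    rw [hfAB, map_add]; exact AEEqFun.coeFn_add _ _) (ENNReal.ofReal t)
  refine this.trans (add_le_add ((h1 A).trans_eq ?_) (mul_le_mul_right ((h2 B).trans_eq ?_) _))
  · exact eLpNorm_congr_ae (AEEqFun.coeFn_mk _ _)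
  · exact eLpNorm_congr_ae (AEEqFun.coeFn_mk _ _)

/-- Optimal weight of total mass `t` for `f`. -/
noncomputable def czW {α : Type*} [MeasurableSpace α] (ν : Measure α)
    (f : α → ℝ) (t : ℝ) (x : α) : ℝ≥0∞ :=
  open Classical in
  if decRearr ν f t < (‖f x‖₊ : ℝ≥0∞) then 1
  else if (‖f x‖₊ : ℝ≥0∞) = decRearr ν f t then
    (ENNReal.ofReal t - ν {y | decRearr ν f t < (‖f y‖₊ : ℝ≥0∞)}) /
      ν {y | (‖f y‖₊ : ℝ≥0∞) = decRearr ν f t}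
  else 0

section
variable {α : Type*} [MeasurableSpace α] (ν : Measure α) {f : α → ℝ}

lemma czW_measurable (hf : Measurable f) (t : ℝ) : Measurable (czW ν f t) := by
  have hφ : Measurable (fun x => (‖f x‖₊ : ℝ≥0∞)) := by fun_prop
  unfold czW
  refine Measurable.ite (measurableSet_lt measurable_const hφ) measurable_const ?_
  exact Measurable.ite (measurableSet_eq_fun hφ measurable_const) measurable_const measurable_const

lemma czW_dist_le (t : ℝ) : ν {y | decRearr ν f t < (‖f y‖₊ : ℝ≥0∞)} ≤ ENNReal.ofReal t := by
  by_contra h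
  push Not at h
  exact lt_irrefl _ ((cz_lt_decRearr_iff ν f t _).2 h)

lemma czW_le_dist [IsFiniteMeasure ν] (hf : Measurable f) (t : ℝ)
    (ht : ENNReal.ofReal t ≤ ν Set.univ) :
    ENNReal.ofReal t ≤ ν {y | decRearr ν f t ≤ (‖f y‖₊ : ℝ≥0∞)} := by
  have hφ : Measurable (fun x => (‖f x‖₊ : ℝ≥0∞)) := by fun_prop
  set lam := decRearr ν f t with hlam
  by_cases h0 : lam = 0
  · rw [h0]; simpa using ht
  obtain ⟨u, hu_mono, hu_lt, hu_lim⟩ := exists_seq_strictMono_tendsto' (pos_iff_ne_zero.2 h0)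
  have hset : {y | lam ≤ (‖f y‖₊ : ℝ≥0∞)} = ⋂ n, {y | u n < (‖f y‖₊ : ℝ≥0∞)} := by
    ext y
    simp only [Set.mem_ofPred_eq, Set.mem_iInter]
    constructor
    · intro h n
      exact (hu_lt n).2.trans_le h
    · intro h
      exact le_of_tendsto' hu_lim fun n => (h n).le
  rw [hset, Antitone.measure_iInter]
  · refine le_iInf fun n => ?_
    exact ((cz_lt_decRearr_iff ν f t _).1 (hu_lt n).2).le
  · intro m n hmn x hx
    exact lt_of_le_of_lt (hu_mono.monotone hmn) hx
  · intro n
    exact (measurableSet_lt measurable_const hφ).nullMeasurableSet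
  · exact ⟨0, measure_ne_top _ _⟩

lemma czW_num_le [IsFiniteMeasure ν] (hf : Measurable f) (t : ℝ)
    (ht : ENNReal.ofReal t ≤ ν Set.univ) :
    ENNReal.ofReal t - ν {y | decRearr ν f t < (‖f y‖₊ : ℝ≥0∞)} ≤
      ν {y | (‖f y‖₊ : ℝ≥0∞) = decRearr ν f t} := by
  rw [tsub_le_iff_left]
  refine (czW_le_dist ν hf t ht).trans (le_trans (measure_mono ?_) (measure_union_le _ _))
  intro y hy
  rcases lt_or_eq_of_le (show decRearr ν f t ≤ (‖f y‖₊ : ℝ≥0∞) from hy) with h | h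
  · exact Or.inl h
  · exact Or.inr h.symm

lemma czW_le_one [IsFiniteMeasure ν] (hf : Measurable f) (t : ℝ)
    (ht : ENNReal.ofReal t ≤ ν Set.univ) (x : α) : czW ν f t x ≤ 1 := by
  unfold czW
  split_ifs
  · exact le_rfl
  · exact ENNReal.div_le_of_le_mul (by rw [one_mul]; exact czW_num_le ν hf t ht)
  · exact zero_le_one

lemma czW_ne_zero {t : ℝ} {x : α} (h : czW ν f t x ≠ 0) :
    decRearr ν f t ≤ (‖f x‖₊ : ℝ≥0∞) := by
  unfold czW at h
  split_ifs at h with h1 h2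
  · exact h1.le
  · exact h2.ge
  · exact absurd rfl h

lemma czW_ne_one {t : ℝ} {x : α} (h : czW ν f t x ≠ 1) :
    (‖f x‖₊ : ℝ≥0∞) ≤ decRearr ν f t := by
  by_contra hc
  push Not at hc
  apply h
  unfold czW
  rw [if_pos hc]

lemma czW_mono [IsFiniteMeasure ν] (hf : Measurable f) {s t : ℝ} (hst : s ≤ t)
    (hs : ENNReal.ofReal s ≤ ν Set.univ) (x : α) :
    czW ν f s x ≤ czW ν f t x := by
  rcases (cz_decRearr_anti ν f hst).lt_or_eq with h | h
  · by_cases h0 : czW ν f s x = 0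
    · rw [h0]; exact zero_le
    · by_cases h1 : czW ν f t x = 1
      · rw [h1]; exact czW_le_one ν hf s hs x
      · exact absurd ((czW_ne_zero ν h0).trans (czW_ne_one ν h1)) (not_le.2 h)
  · unfold czW
    rw [h]
    split_ifs
    · exact le_rfl
    · gcongr
    · exact le_rfl

lemma czW_setLIntegral [IsFiniteMeasure ν] (hf : Measurable f) (t : ℝ)
    (ht : ENNReal.ofReal t ≤ ν Set.univ) (A : Set α) (hA : MeasurableSet A)
    (hAt : {y | decRearr ν f t ≤ (‖f y‖₊ : ℝ≥0∞)} ⊆ A) :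
    ∫⁻ x in A, czW ν f t x ∂ν = ENNReal.ofReal t := by
  have hφ : Measurable (fun x => (‖f x‖₊ : ℝ≥0∞)) := by fun_prop
  set lam := decRearr ν f t with hlam
  set c := (ENNReal.ofReal t - ν {y | lam < (‖f y‖₊ : ℝ≥0∞)}) /
      ν {y | (‖f y‖₊ : ℝ≥0∞) = lam} with hc
  have hm1 : MeasurableSet {y | lam < (‖f y‖₊ : ℝ≥0∞)} := measurableSet_lt measurable_const hφ
  have hm2 : MeasurableSet {y | (‖f y‖₊ : ℝ≥0∞) = lam} := measurableSet_eq_fun hφ measurable_const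
  have hW : (A.indicator (czW ν f t)) = fun x =>
      Set.indicator {y | lam < (‖f y‖₊ : ℝ≥0∞)} (fun _ => 1) x +
      Set.indicator {y | (‖f y‖₊ : ℝ≥0∞) = lam} (fun _ => c) x := by
    ext x
    by_cases hx : x ∈ A
    · rw [Set.indicator_of_mem hx]
      unfold czW
      simp only [Set.indicator, Set.mem_ofPred_eq, ← hlam]
      split_ifs with h1 h2
      · exact absurd h2 h1.ne'
      · simp
      · simp [hc]
      · simp
    · have hx' : (‖f x‖₊ : ℝ≥0∞) < lam := by
        by_contra h; push Not at h; exact hx (hAt h)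
      rw [Set.indicator_of_notMem hx]
      simp [Set.indicator, hx'.not_gt, hx'.ne]
  rw [← lintegral_indicator hA, hW, lintegral_add_left (measurable_const.indicator hm1),
    lintegral_indicator_const hm1, lintegral_indicator_const hm2, one_mul]
  have hnum := czW_num_le ν hf t ht
  rw [← hlam] at hnum
  have : c * ν {y | (‖f y‖₊ : ℝ≥0∞) = lam}
      = ENNReal.ofReal t - ν {y | lam < (‖f y‖₊ : ℝ≥0∞)} := by
    rw [hc]
    by_cases h0 : ν {y | (‖f y‖₊ : ℝ≥0∞) = lam} = 0
    · rw [h0] at hnum ⊢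
      simp [le_antisymm hnum zero_le]
    · exact ENNReal.div_mul_cancel h0 (measure_ne_top _ _)
  rw [this]
  exact add_tsub_cancel_of_le (czW_dist_le ν t)

lemma czW_lintegral [IsFiniteMeasure ν] (hf : Measurable f) (t : ℝ)
    (ht : ENNReal.ofReal t ≤ ν Set.univ) :
    ∫⁻ x, czW ν f t x ∂ν = ENNReal.ofReal t := by
  simpa using czW_setLIntegral ν hf t ht Set.univ MeasurableSet.univ (Set.subset_univ _)

lemma czW_layer [SFinite ν] (hf : Measurable f) {W : α → ℝ≥0∞} (hW : Measurable W) :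
    ∫⁻ x, (‖f x‖₊ : ℝ≥0∞) * W x ∂ν =
      ∫⁻ l in Set.Ioi (0:ℝ), ∫⁻ x in {x | ENNReal.ofReal l < (‖f x‖₊ : ℝ≥0∞)}, W x ∂ν := by
  have hφ : Measurable (fun x => (‖f x‖₊ : ℝ≥0∞)) := by fun_prop
  have := cz_layer0 (ν.withDensity W) hφ
  rw [lintegral_withDensity_eq_lintegral_mul _ hW hφ] at this
  simp only [Pi.mul_apply] at this
  simp_rw [mul_comm _ (W _)]
  rw [this]
  refine lintegral_congr fun l => ?_
  rw [withDensity_apply _ (measurableSet_lt measurable_const hφ)]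

lemma cz_weight_le [SFinite ν] (hf : Measurable f) {W : α → ℝ≥0∞} (hW : Measurable W)
    (hW1 : ∀ x, W x ≤ 1) :
    ∫⁻ x, (‖f x‖₊ : ℝ≥0∞) * W x ∂ν ≤ czK ν f (∫⁻ x, W x ∂ν) := by
  rw [czW_layer ν hf hW]
  refine lintegral_mono fun l => le_min (setLIntegral_le_lintegral _ _) ?_
  calc _ ≤ ∫⁻ x in {x | ENNReal.ofReal l < (‖f x‖₊ : ℝ≥0∞)}, 1 ∂ν := lintegral_mono fun x => hW1 x
    _ = _ := by simp

lemma czW_opt [IsFiniteMeasure ν] (hf : Measurable f) (t : ℝ)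
    (ht : ENNReal.ofReal t ≤ ν Set.univ) :
    ∫⁻ x, (‖f x‖₊ : ℝ≥0∞) * czW ν f t x ∂ν = czK ν f (ENNReal.ofReal t) := by
  have hφ : Measurable (fun x => (‖f x‖₊ : ℝ≥0∞)) := by fun_prop
  rw [czW_layer ν hf (czW_measurable ν hf t), czK]
  refine lintegral_congr fun l => ?_
  have hm : MeasurableSet {x | ENNReal.ofReal l < (‖f x‖₊ : ℝ≥0∞)} :=
    measurableSet_lt measurable_const hφ
  rcases lt_or_ge (ENNReal.ofReal l) (decRearr ν f t) with h | h
  · rw [min_eq_left ((cz_lt_decRearr_iff ν f t _).1 h).le]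
    exact czW_setLIntegral ν hf t ht _ hm fun x hx => h.trans_le hx
  · have h' := h
    rw [← not_lt, cz_lt_decRearr_iff, not_lt] at h'
    rw [min_eq_right h', setLIntegral_congr_fun (g := fun _ => 1) hm]
    · simp
    · intro x hx
      show czW ν f t x = 1
      by_contra hne
      exact absurd (hx.trans_le (czW_ne_one ν hne)) (not_lt.2 h)

lemma czK_mono_left {μ ν : Measure α} (h : ν ≤ μ) (t : ℝ≥0∞) : czK ν f t ≤ czK μ f t := by
  refine lintegral_mono fun l => ?_
  exact min_le_min le_rfl (h _)

end

lemma cz_abel (N : ℕ) (a x y : ℕ → ℝ) (δ Y : ℝ) (ha : ∀ j, a (j+1) ≤ a j) (ha0 : ∀ j, 0 ≤ a j)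
    (hδ : 0 ≤ δ) (hY : 0 ≤ Y)
    (hxy : ∀ k ≤ N, ∑ j ∈ Finset.range k, x j ≤ ∑ j ∈ Finset.range k, y j + δ)
    (hy : ∀ j < N, y j ≤ Y) :
    ∑ j ∈ Finset.range N, a j * x j ≤
      ∑ j ∈ Finset.range N, y j * a (j+1) + a 0 * (δ + Y) := by
  have h1 : ∀ k < N, ∑ j ∈ Finset.range (k+1), a j * (y j - x j) ≥
      a k * (∑ j ∈ Finset.range (k+1), (y j - x j) + δ) - a 0 * δ := by
    intro k
    induction k with
    | zero => intro _; simp; linarith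
    | succ k ih =>
      intro hk
      have h := ih (by omega)
      rw [Finset.sum_range_succ, Finset.sum_range_succ (fun j => y j - x j)]
      have h2 := hxy (k+1) (by omega)
      have h3 : 0 ≤ ∑ j ∈ Finset.range (k+1), (y j - x j) + δ := by
        rw [Finset.sum_sub_distrib]; linarith
      nlinarith [mul_le_mul_of_nonneg_right (ha k) h3]
  have h2 : ∑ j ∈ Finset.range N, a j * (y j - x j) ≥ - (a 0 * δ) := by
    rcases N with _ | k
    · simp; exact mul_nonneg (ha0 0) hδ
    · have h := h1 k (by omega)
      have h2 := hxy (k+1) (by omega)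
      have h3 : 0 ≤ ∑ j ∈ Finset.range (k+1), (y j - x j) + δ := by
        rw [Finset.sum_sub_distrib]; linarith
      nlinarith [mul_nonneg (ha0 k) h3]
  have h3 : ∑ j ∈ Finset.range N, (a j - a (j+1)) * y j ≤ a 0 * Y := by
    calc _ ≤ ∑ j ∈ Finset.range N, (a j - a (j+1)) * Y :=
          Finset.sum_le_sum fun j hj => mul_le_mul_of_nonneg_left (hy j (Finset.mem_range.1 hj))
            (by linarith [ha j])
      _ = (a 0 - a N) * Y := by rw [← Finset.sum_mul, Finset.sum_range_sub']
      _ ≤ a 0 * Y := by nlinarith [ha0 N]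
  have h4 : ∑ j ∈ Finset.range N, a j * (y j - x j) =
      ∑ j ∈ Finset.range N, (a j - a (j+1)) * y j + ∑ j ∈ Finset.range N, y j * a (j+1)
        - ∑ j ∈ Finset.range N, a j * x j := by
    rw [← Finset.sum_add_distrib, ← Finset.sum_sub_distrib]
    exact Finset.sum_congr rfl fun j _ => by ring
  linarith

section
variable {α : Type*} [MeasurableSpace α] (μ : Measure α)

/-- Bilinear forms dominated by the `(1, ∞)` and `(∞, 1)` norms. -/
def czAdm (β : (α →ₘ[μ] ℝ) →ₗ[ℝ] (α →ₘ[μ] ℝ) →ₗ[ℝ] ℝ) : Prop :=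
  (∀ u v : α →ₘ[μ] ℝ, MemLp u 1 μ → MemLp v ⊤ μ → ‖β u v‖ₑ ≤ eLpNorm u 1 μ * eLpNorm v ⊤ μ) ∧
  (∀ u v : α →ₘ[μ] ℝ, MemLp u ⊤ μ → MemLp v 1 μ → ‖β u v‖ₑ ≤ eLpNorm u ⊤ μ * eLpNorm v 1 μ)

lemma cz_functional (ρ : α → ℝ) : ∃ F : (α →ₘ[μ] ℝ) →ₗ[ℝ] ℝ,
    ∀ u : α →ₘ[μ] ℝ, Integrable (fun x => u x * ρ x) μ → F u = ∫ x, u x * ρ x ∂μ := by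
  have hadd : ∀ u v : α →ₘ[μ] ℝ, (fun x => (u + v : α →ₘ[μ] ℝ) x * ρ x) =ᵐ[μ]
      fun x => u x * ρ x + v x * ρ x := by
    intro u v
    filter_upwards [AEEqFun.coeFn_add u v] with x hx
    rw [hx, Pi.add_apply, add_mul]
  have hsmul : ∀ (c : ℝ) (u : α →ₘ[μ] ℝ), (fun x => (c • u : α →ₘ[μ] ℝ) x * ρ x) =ᵐ[μ]
      fun x => c * (u x * ρ x) := by
    intro c u
    filter_upwards [AEEqFun.coeFn_smul c u] with x hx
    rw [hx, Pi.smul_apply, smul_eq_mul, mul_assoc]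
  let P : Submodule ℝ (α →ₘ[μ] ℝ) :=
    { carrier := {u | Integrable (fun x => u x * ρ x) μ}
      add_mem' := fun {u v} hu hv => (integrable_congr (hadd u v)).2 (Integrable.add hu hv)
      zero_mem' := by
        refine (integrable_congr ?_).2 (integrable_zero α ℝ μ)
        filter_upwards [AEEqFun.coeFn_zero (α := α) (β := ℝ) (μ := μ)] with x hx
        rw [hx]; simp
      smul_mem' := fun c u hu => (integrable_congr (hsmul c u)).2 (Integrable.const_mul hu c) }
  let F0 : P →ₗ[ℝ] ℝ :=
    { toFun := fun u => ∫ x, (u : α →ₘ[μ] ℝ) x * ρ x ∂μ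
      map_add' := fun u v => by
        rw [← integral_add u.2 v.2]
        exact integral_congr_ae (hadd u v)
      map_smul' := fun c u => by
        simp only [RingHom.id_apply, smul_eq_mul]
        rw [← integral_const_mul]
        exact integral_congr_ae (hsmul c u) }
  obtain ⟨F, hF⟩ := F0.exists_extend
  refine ⟨F, fun u hu => ?_⟩
  have := LinearMap.congr_fun hF ⟨u, hu⟩
  exact this

lemma cz_half_top {v σ : α → ℝ} (hσ : Measurable σ) {c : ℝ≥0∞} (h : ∫⁻ x, ‖σ x‖ₑ ∂μ ≤ c) :
    ∫⁻ x, ‖v x * σ x‖ₑ ∂μ ≤ eLpNorm v ⊤ μ * c := by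
  calc _ ≤ ∫⁻ x, eLpNorm v ⊤ μ * ‖σ x‖ₑ ∂μ := by
        refine lintegral_mono_ae ?_
        have : ∀ᵐ x ∂μ, ‖v x‖ₑ ≤ eLpNorm v ⊤ μ := by
          rw [eLpNorm_exponent_top]; exact ae_le_eLpNormEssSup
        filter_upwards [this] with x hx
        rw [enorm_mul]; gcongr
    _ = eLpNorm v ⊤ μ * ∫⁻ x, ‖σ x‖ₑ ∂μ := lintegral_const_mul _ (by fun_prop)
    _ ≤ _ := by gcongr

lemma cz_half_one {u : α → ℝ} (hu : Measurable u) {ρ : ℕ → α → ℝ} (hρ : ∀ j, Measurable (ρ j))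
    (N : ℕ) (h : ∀ x, ∑ j ∈ Finset.range N, |ρ j x| ≤ 1) :
    ∑ j ∈ Finset.range N, ∫⁻ x, ‖u x * ρ j x‖ₑ ∂μ ≤ eLpNorm u 1 μ := by
  rw [← lintegral_finsetSum _ (fun j _ => by fun_prop), eLpNorm_one_eq_lintegral_enorm]
  refine lintegral_mono fun x => ?_
  simp_rw [enorm_mul]
  rw [← Finset.mul_sum]
  have : ∑ j ∈ Finset.range N, ‖ρ j x‖ₑ ≤ 1 := by
    simp_rw [← ofReal_norm, Real.norm_eq_abs]
    rw [← ENNReal.ofReal_sum_of_nonneg (fun _ _ => abs_nonneg _)]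
    exact ENNReal.ofReal_le_one.2 (h x)
  calc _ ≤ ‖u x‖ₑ * 1 := by gcongr
    _ = _ := mul_one _

lemma cz_form (N : ℕ) (ρ σ : ℕ → α → ℝ) (hρ : ∀ j, Measurable (ρ j)) (hσ : ∀ j, Measurable (σ j))
    (c : ℝ) (hc : 0 < c)
    (hρ1 : ∀ x, ∑ j ∈ Finset.range N, |ρ j x| ≤ 1) (hσ1 : ∀ x, ∑ j ∈ Finset.range N, |σ j x| ≤ 1)
    (hρc : ∀ j < N, ∫⁻ x, ‖ρ j x‖ₑ ∂μ ≤ ENNReal.ofReal c)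
    (hσc : ∀ j < N, ∫⁻ x, ‖σ j x‖ₑ ∂μ ≤ ENNReal.ofReal c) :
    ∃ β : (α →ₘ[μ] ℝ) →ₗ[ℝ] (α →ₘ[μ] ℝ) →ₗ[ℝ] ℝ, czAdm μ β ∧
      ∀ u v : α →ₘ[μ] ℝ, (∀ j < N, Integrable (fun x => u x * ρ j x) μ) →
        (∀ j < N, Integrable (fun x => v x * σ j x) μ) →
        β u v = ∑ j ∈ Finset.range N, c⁻¹ * ((∫ x, u x * ρ j x ∂μ) * ∫ x, v x * σ j x ∂μ) := by
  choose F hF using fun j => cz_functional μ (ρ j)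
  choose G hG using fun j => cz_functional μ (σ j)
  let β : (α →ₘ[μ] ℝ) →ₗ[ℝ] (α →ₘ[μ] ℝ) →ₗ[ℝ] ℝ :=
    ∑ j ∈ Finset.range N, c⁻¹ • (F j).smulRight (G j)
  have hβ : ∀ u v, β u v = ∑ j ∈ Finset.range N, c⁻¹ * (F j u * G j v) := by
    intro u v
    simp [β, LinearMap.sum_apply]
  have hval : ∀ u v : α →ₘ[μ] ℝ, (∀ j < N, Integrable (fun x => u x * ρ j x) μ) →
        (∀ j < N, Integrable (fun x => v x * σ j x) μ) →
        β u v = ∑ j ∈ Finset.range N, c⁻¹ * ((∫ x, u x * ρ j x ∂μ) * ∫ x, v x * σ j x ∂μ) := by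
    intro u v hu hv
    rw [hβ]
    refine Finset.sum_congr rfl fun j hj => ?_
    rw [hF j u (hu j (Finset.mem_range.1 hj)), hG j v (hv j (Finset.mem_range.1 hj))]
  have hc' : ENNReal.ofReal c ≠ 0 := by simpa using hc
  have hb : ∀ u v : α →ₘ[μ] ℝ, (∀ j < N, Integrable (fun x => u x * ρ j x) μ) →
        (∀ j < N, Integrable (fun x => v x * σ j x) μ) →
        ‖β u v‖ₑ ≤ ∑ j ∈ Finset.range N, (ENNReal.ofReal c)⁻¹ *
          ((∫⁻ x, ‖u x * ρ j x‖ₑ ∂μ) * ∫⁻ x, ‖v x * σ j x‖ₑ ∂μ) := by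
    intro u v hu hv
    rw [hval u v hu hv]
    refine (enorm_sum_le _ _).trans (Finset.sum_le_sum fun j _ => ?_)
    rw [enorm_mul, enorm_mul]
    have : ‖c⁻¹‖ₑ = (ENNReal.ofReal c)⁻¹ := by
      rw [Real.enorm_of_nonneg (by positivity), ENNReal.ofReal_inv_of_pos hc]
    rw [this]
    gcongr <;> exact enorm_integral_le_lintegral_enorm _
  have i1 : ∀ (ρ : ℕ → α → ℝ) (_ : ∀ j, Measurable (ρ j)) (u : α →ₘ[μ] ℝ)
      (_ : ∀ x, ∑ j ∈ Finset.range N, |ρ j x| ≤ 1), MemLp u 1 μ →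
      ∀ j < N, Integrable (fun x => u x * ρ j x) μ := by
    intro ρ hρ u h1 hu j hj
    refine ⟨(u.measurable.mul (hρ j)).aestronglyMeasurable, ?_⟩
    refine lt_of_le_of_lt ?_ hu.2
    refine le_trans ?_ (cz_half_one μ u.measurable hρ N h1)
    exact Finset.single_le_sum (f := fun j => ∫⁻ x, ‖u x * ρ j x‖ₑ ∂μ)
      (fun _ _ => zero_le) (Finset.mem_range.2 hj)
  have i2 : ∀ (ρ : ℕ → α → ℝ) (_ : ∀ j, Measurable (ρ j)) (u : α →ₘ[μ] ℝ)
      (_ : ∀ j < N, ∫⁻ x, ‖ρ j x‖ₑ ∂μ ≤ ENNReal.ofReal c), MemLp u ⊤ μ →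
      ∀ j < N, Integrable (fun x => u x * ρ j x) μ := by
    intro ρ hρ u h1 hu j hj
    refine ⟨(u.measurable.mul (hρ j)).aestronglyMeasurable, ?_⟩
    refine lt_of_le_of_lt (cz_half_top μ (hρ j) (h1 j hj)) ?_
    exact ENNReal.mul_lt_top hu.2 ENNReal.ofReal_lt_top
  refine ⟨β, ⟨fun u v hu hv => ?_, fun u v hu hv => ?_⟩, hval⟩
  · refine (hb u v (i1 ρ hρ u hρ1 hu) (i2 σ hσ v hσc hv)).trans ?_
    calc _ ≤ ∑ j ∈ Finset.range N, (∫⁻ x, ‖u x * ρ j x‖ₑ ∂μ) * eLpNorm v ⊤ μ := by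
          refine Finset.sum_le_sum fun j hj => ?_
          have := cz_half_top μ (v := v) (hσ j) (hσc j (Finset.mem_range.1 hj))
          calc _ ≤ (ENNReal.ofReal c)⁻¹ *
                ((∫⁻ x, ‖u x * ρ j x‖ₑ ∂μ) * (eLpNorm v ⊤ μ * ENNReal.ofReal c)) := by gcongr
            _ = ((ENNReal.ofReal c)⁻¹ * ENNReal.ofReal c) *
                ((∫⁻ x, ‖u x * ρ j x‖ₑ ∂μ) * eLpNorm v ⊤ μ) := by ring
            _ = _ := by rw [ENNReal.inv_mul_cancel hc' ENNReal.ofReal_ne_top, one_mul]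
      _ ≤ _ := by
          rw [← Finset.sum_mul]
          gcongr
          exact cz_half_one μ u.measurable hρ N hρ1
  · refine (hb u v (i2 ρ hρ u hρc hu) (i1 σ hσ v hσ1 hv)).trans ?_
    calc _ ≤ ∑ j ∈ Finset.range N, eLpNorm u ⊤ μ * (∫⁻ x, ‖v x * σ j x‖ₑ ∂μ) := by
          refine Finset.sum_le_sum fun j hj => ?_
          have := cz_half_top μ (v := u) (hρ j) (hρc j (Finset.mem_range.1 hj))
          calc _ ≤ (ENNReal.ofReal c)⁻¹ *
                ((eLpNorm u ⊤ μ * ENNReal.ofReal c) * (∫⁻ x, ‖v x * σ j x‖ₑ ∂μ)) := by gcongr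
            _ = ((ENNReal.ofReal c)⁻¹ * ENNReal.ofReal c) *
                (eLpNorm u ⊤ μ * (∫⁻ x, ‖v x * σ j x‖ₑ ∂μ)) := by ring
            _ = _ := by rw [ENNReal.inv_mul_cancel hc' ENNReal.ofReal_ne_top, one_mul]
      _ ≤ _ := by
          rw [← Finset.mul_sum]
          gcongr
          exact cz_half_one μ v.measurable hσ N hσ1

end

/-- Sign with values in `{1, -1}`. -/
noncomputable def czS (r : ℝ) : ℝ := if 0 ≤ r then 1 else -1

lemma czS_measurable : Measurable czS :=
  Measurable.ite measurableSet_Ici measurable_const measurable_const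

lemma czS_abs (r : ℝ) : |czS r| = 1 := by unfold czS; split_ifs <;> simp

lemma czS_mul (r : ℝ) : r * czS r = |r| := by
  unfold czS; split_ifs with h
  · rw [abs_of_nonneg h, mul_one]
  · rw [abs_of_neg (not_le.1 h)]; ring

section
variable {α : Type*} [MeasurableSpace α]

lemma cz_K_ne_top (ν : Measure α) [SigmaFinite ν] {f : α → ℝ} (hf : Measurable f)
    (hi : Integrable f ν) (t : ℝ≥0∞) : czK ν f t ≠ ⊤ := by
  have h := cz_K_le_add ν (f := f) (a := f) (b := 0) hf (by simp) t
  simp only [eLpNorm_zero, mul_zero, add_zero] at h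
  exact (h.trans_lt (memLp_one_iff_integrable.2 hi).2).ne

lemma cz_real_weight (ν : Measure α) [IsFiniteMeasure ν] {g : α → ℝ} (hg : Measurable g)
    (hi : Integrable g ν) {W : α → ℝ} (hW : Measurable W) (h0 : ∀ x, 0 ≤ W x) (h1 : ∀ x, W x ≤ 1) :
    Integrable (fun x => |g x| * W x) ν ∧ Integrable W ν ∧
    ∫ x, |g x| * W x ∂ν ≤ (czK ν g (ENNReal.ofReal (∫ x, W x ∂ν))).toReal := by
  have hWi : Integrable W ν := by
    refine Integrable.of_bound hW.aestronglyMeasurable 1 (Filter.Eventually.of_forall fun x => ?_)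
    rw [Real.norm_eq_abs, abs_of_nonneg (h0 x)]; exact h1 x
  have hgi : Integrable (fun x => |g x| * W x) ν := by
    refine Integrable.mono' hi.abs (by fun_prop) (Filter.Eventually.of_forall fun x => ?_)
    rw [Real.norm_eq_abs, abs_mul, abs_abs, abs_of_nonneg (h0 x)]
    exact mul_le_of_le_one_right (abs_nonneg _) (h1 x)
  refine ⟨hgi, hWi, ?_⟩
  rw [integral_eq_lintegral_of_nonneg_ae
    (Filter.Eventually.of_forall fun x => mul_nonneg (abs_nonneg _) (h0 x)) hgi.1]
  refine ENNReal.toReal_mono (cz_K_ne_top ν hg hi _) ?_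
  rw [ofReal_integral_eq_lintegral_ofReal hWi (Filter.Eventually.of_forall h0)]
  refine le_trans (le_of_eq ?_) (cz_weight_le ν hg (W := fun x => ENNReal.ofReal (W x))
    (by fun_prop) (fun x => ENNReal.ofReal_le_one.2 (h1 x)))
  refine lintegral_congr fun x => ?_
  rw [ENNReal.ofReal_mul (abs_nonneg _), ← Real.norm_eq_abs, ofReal_norm]; rfl

/-- Real-valued optimal weight. -/
noncomputable def czw (ν : Measure α) (f : α → ℝ) (t : ℝ) (x : α) : ℝ := (czW ν f t x).toReal

lemma czw_measurable (ν : Measure α) {f : α → ℝ} (hf : Measurable f) (t : ℝ) :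
    Measurable (czw ν f t) := (czW_measurable ν hf t).ennreal_toReal

lemma czw_nonneg (ν : Measure α) (f : α → ℝ) (t : ℝ) (x : α) : 0 ≤ czw ν f t x :=
  ENNReal.toReal_nonneg

lemma czw_le_one (ν : Measure α) [IsFiniteMeasure ν] {f : α → ℝ} (hf : Measurable f) {t : ℝ}
    (ht : ENNReal.ofReal t ≤ ν Set.univ) (x : α) : czw ν f t x ≤ 1 :=
  ENNReal.toReal_le_of_le_ofReal zero_le_one (by simpa using czW_le_one ν hf t ht x)

lemma czw_ne_top (ν : Measure α) [IsFiniteMeasure ν] {f : α → ℝ} (hf : Measurable f) {t : ℝ}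
    (ht : ENNReal.ofReal t ≤ ν Set.univ) (x : α) : czW ν f t x ≠ ⊤ :=
  ((czW_le_one ν hf t ht x).trans_lt ENNReal.one_lt_top).ne

lemma czw_mono (ν : Measure α) [IsFiniteMeasure ν] {f : α → ℝ} (hf : Measurable f) {s t : ℝ}
    (hst : s ≤ t) (ht : ENNReal.ofReal t ≤ ν Set.univ) (x : α) : czw ν f s x ≤ czw ν f t x :=
  ENNReal.toReal_mono (czw_ne_top ν hf ht x)
    (czW_mono ν hf hst ((ENNReal.ofReal_le_ofReal hst).trans ht) x)

lemma czw_integral (ν : Measure α) [IsFiniteMeasure ν] {f : α → ℝ} (hf : Measurable f) {t : ℝ}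
    (h0 : 0 ≤ t) (ht : ENNReal.ofReal t ≤ ν Set.univ) : ∫ x, czw ν f t x ∂ν = t := by
  unfold czw
  rw [integral_toReal (czW_measurable ν hf t).aemeasurable
    (Filter.Eventually.of_forall fun x => (czw_ne_top ν hf ht x).lt_top),
    czW_lintegral ν hf t ht, ENNReal.toReal_ofReal h0]

lemma czw_opt (ν : Measure α) [IsFiniteMeasure ν] {f : α → ℝ} (hf : Measurable f) {t : ℝ}
    (ht : ENNReal.ofReal t ≤ ν Set.univ) :
    ∫ x, |f x| * czw ν f t x ∂ν = (czK ν f (ENNReal.ofReal t)).toReal := by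
  rw [integral_eq_lintegral_of_nonneg_ae
    (Filter.Eventually.of_forall fun x => mul_nonneg (abs_nonneg _) (czw_nonneg ν f t x))
    (hf.abs.mul (czw_measurable ν hf t)).aestronglyMeasurable,
    ← czW_opt ν hf t ht]
  congr 1
  refine lintegral_congr fun x => ?_
  rw [ENNReal.ofReal_mul (abs_nonneg _), ← Real.norm_eq_abs, ofReal_norm, czw,
    ENNReal.ofReal_toReal (czw_ne_top ν hf ht x)]; rfl

lemma czw_lower (ν : Measure α) {f : α → ℝ} {t : ℝ} {x : α} (h : czw ν f t x ≠ 0) :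
    (decRearr ν f t).toReal ≤ |f x| := by
  have h1 : czW ν f t x ≠ 0 := by
    intro h'; apply h; rw [czw, h']; rfl
  have := ENNReal.toReal_mono ENNReal.coe_ne_top (czW_ne_zero ν h1)
  simpa using this

lemma czw_upper (ν : Measure α) {f : α → ℝ} {t : ℝ} {x : α} (hfin : decRearr ν f t ≠ ⊤)
    (h : czw ν f t x ≠ 1) :
    |f x| ≤ (decRearr ν f t).toReal := by
  have h1 : czW ν f t x ≠ 1 := by
    intro h'; apply h; rw [czw, h']; rfl
  have := ENNReal.toReal_mono hfin (czW_ne_one ν h1)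
  simpa using this

lemma cz_decRearr_le (ν : Measure α) {f : α → ℝ} {M : ℝ} (hM : ∀ᵐ x ∂ν, |f x| ≤ M) (t : ℝ) :
    decRearr ν f t ≤ ENNReal.ofReal M := by
  refine sInf_le ?_
  have : ν {x | ENNReal.ofReal M < (‖f x‖₊ : ℝ≥0∞)} = 0 := by
    have h2 : ∀ᵐ x ∂ν, ¬ (ENNReal.ofReal M < (‖f x‖₊ : ℝ≥0∞)) := by
      filter_upwards [hM] with x hx
      rw [not_lt]
      show ‖f x‖ₑ ≤ _
      rw [← ofReal_norm, Real.norm_eq_abs]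
      exact ENNReal.ofReal_le_ofReal hx
    rw [ae_iff] at h2
    simpa using h2
  show ν _ ≤ _
  rw [this]; exact zero_le

/-- increments of the chain of weights, extended by zero outside `S` -/
noncomputable def czInc (μ : Measure α) (S : Set α) (f : α → ℝ) (c : ℝ) (j : ℕ) (x : α) : ℝ :=
  czw (μ.restrict S) f ((j+1 : ℕ) * c) x - czw (μ.restrict S) f (j * c) x

noncomputable def czRho (μ : Measure α) (S : Set α) (f : α → ℝ) (c : ℝ) (j : ℕ) : α → ℝ :=
  S.indicator fun x => czS (f x) * czInc μ S f c j x

lemma czInc_measurable (μ : Measure α) (S : Set α) {f : α → ℝ} (hf : Measurable f) (c : ℝ) (j : ℕ) :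
    Measurable (czInc μ S f c j) := (czw_measurable _ hf _).sub (czw_measurable _ hf _)

lemma czRho_measurable (μ : Measure α) {S : Set α} (hS : MeasurableSet S) {f : α → ℝ}
    (hf : Measurable f) (c : ℝ) (j : ℕ) : Measurable (czRho μ S f c j) :=
  ((czS_measurable.comp hf).mul (czInc_measurable μ S hf c j)).indicator hS

lemma cz_ht {μ : Measure α} {S : Set α} {N : ℕ} {c : ℝ} (hc : 0 < c)
    (h : ENNReal.ofReal (N * c) ≤ μ S) {j : ℕ} (hj : j ≤ N) :
    ENNReal.ofReal (j * c) ≤ (μ.restrict S) Set.univ := by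
  rw [Measure.restrict_apply_univ]
  refine le_trans (ENNReal.ofReal_le_ofReal ?_) h
  have : (j:ℝ) ≤ N := by exact_mod_cast hj
  gcongr

lemma czInc_nonneg {μ : Measure α} {S : Set α} [IsFiniteMeasure (μ.restrict S)] {f : α → ℝ}
    (hf : Measurable f)
    {N : ℕ} {c : ℝ} (hc : 0 < c) (h : ENNReal.ofReal (N * c) ≤ μ S) {j : ℕ} (hj : j < N) (x : α) :
    0 ≤ czInc μ S f c j x := by
  refine sub_nonneg.2 (czw_mono _ hf ?_ (cz_ht hc h hj) x)
  push_cast; nlinarith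

lemma czInc_le_one {μ : Measure α} {S : Set α} [IsFiniteMeasure (μ.restrict S)] {f : α → ℝ}
    (hf : Measurable f)
    {N : ℕ} {c : ℝ} (hc : 0 < c) (h : ENNReal.ofReal (N * c) ≤ μ S) {j : ℕ} (hj : j < N) (x : α) :
    czInc μ S f c j x ≤ 1 := by
  have h1 := czw_le_one _ hf (cz_ht hc h (show j + 1 ≤ N from hj)) x
  have h2 := czw_nonneg (μ.restrict S) f (j * c) x
  unfold czInc; linarith

lemma czw_integrable (ν : Measure α) [IsFiniteMeasure ν] {f : α → ℝ} (hf : Measurable f) {t : ℝ}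
    (ht : ENNReal.ofReal t ≤ ν Set.univ) : Integrable (czw ν f t) ν :=
  (cz_real_weight ν measurable_zero (integrable_zero _ _ _) (czw_measurable ν hf t)
    (czw_nonneg ν f t) (czw_le_one ν hf ht)).2.1

lemma czInc_integral {μ : Measure α} {S : Set α} [IsFiniteMeasure (μ.restrict S)] {f : α → ℝ}
    (hf : Measurable f)
    {N : ℕ} {c : ℝ} (hc : 0 < c) (h : ENNReal.ofReal (N * c) ≤ μ S) {j : ℕ} (hj : j < N) :
    ∫ x in S, czInc μ S f c j x ∂μ = c := by
  unfold czInc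
  rw [integral_sub (czw_integrable _ hf (cz_ht hc h hj)) (czw_integrable _ hf (cz_ht hc h hj.le)),
    czw_integral _ hf (by positivity) (cz_ht hc h hj),
    czw_integral _ hf (by positivity) (cz_ht hc h hj.le)]
  push_cast; ring

lemma czRho_sum {μ : Measure α} {S : Set α} [IsFiniteMeasure (μ.restrict S)] {f : α → ℝ}
    (hf : Measurable f)
    {N : ℕ} {c : ℝ} (hc : 0 < c) (h : ENNReal.ofReal (N * c) ≤ μ S) (x : α) :
    ∑ j ∈ Finset.range N, |czRho μ S f c j x| ≤ 1 := by
  by_cases hx : x ∈ S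
  · have : ∀ j ∈ Finset.range N, |czRho μ S f c j x| =
        czw (μ.restrict S) f ((j+1 : ℕ) * c) x - czw (μ.restrict S) f (j * c) x := by
      intro j hj
      rw [czRho, Set.indicator_of_mem hx, abs_mul, czS_abs, one_mul,
        abs_of_nonneg (czInc_nonneg hf hc h (Finset.mem_range.1 hj) x), czInc]
    rw [Finset.sum_congr rfl this,
      Finset.sum_range_sub (fun j : ℕ => czw (μ.restrict S) f (j * c) x)]
    have h1 := czw_le_one _ hf (cz_ht hc h le_rfl) x
    have h2 := czw_nonneg (μ.restrict S) f ((0:ℕ) * c) x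
    linarith
  · simp [czRho, hx]

lemma czRho_lintegral {μ : Measure α} {S : Set α} [IsFiniteMeasure (μ.restrict S)]
    (hS : MeasurableSet S) {f : α → ℝ} (hf : Measurable f)
    {N : ℕ} {c : ℝ} (hc : 0 < c) (h : ENNReal.ofReal (N * c) ≤ μ S) {j : ℕ} (hj : j < N) :
    ∫⁻ x, ‖czRho μ S f c j x‖ₑ ∂μ ≤ ENNReal.ofReal c := by
  have : (fun x => ‖czRho μ S f c j x‖ₑ) =
      S.indicator (fun x => ENNReal.ofReal (czInc μ S f c j x)) := by
    ext x
    by_cases hx : x ∈ S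
    · rw [czRho, Set.indicator_of_mem hx, Set.indicator_of_mem hx, ← ofReal_norm,
        Real.norm_eq_abs, abs_mul, czS_abs, one_mul, abs_of_nonneg (czInc_nonneg hf hc h hj x)]
    · simp [czRho, hx]
  rw [this, lintegral_indicator hS, ← ofReal_integral_eq_lintegral_ofReal,
    czInc_integral hf hc h hj]
  · exact (czw_integrable _ hf (cz_ht hc h hj)).sub (czw_integrable _ hf (cz_ht hc h hj.le))
  · exact Filter.Eventually.of_forall (czInc_nonneg hf hc h hj)

lemma czRho_mul {μ : Measure α} {S : Set α} {f : α → ℝ} {c : ℝ} {j : ℕ} :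
    (fun x => f x * czRho μ S f c j x) = S.indicator (fun x => |f x| * czInc μ S f c j x) := by
  ext x
  by_cases hx : x ∈ S
  · rw [czRho, Set.indicator_of_mem hx, Set.indicator_of_mem hx, ← mul_assoc, czS_mul]
  · simp [czRho, hx]

end

section
variable {α : Type*} [MeasurableSpace α]

lemma cz_inc_sum (μ : Measure α) (S : Set α) [IsFiniteMeasure (μ.restrict S)] {f g : α → ℝ}
    (hf : Measurable f) (hg : Measurable g) (hgi : IntegrableOn g S μ)
    {N : ℕ} {c : ℝ} (hc : 0 < c) (h : ENNReal.ofReal (N * c) ≤ μ S) (k : ℕ) (hk : k ≤ N) :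
    ∑ j ∈ Finset.range k, ∫ x in S, |g x| * czInc μ S f c j x ∂μ
      = ∫ x in S, |g x| * czw (μ.restrict S) f (k * c) x ∂μ := by
  have hi : ∀ j ≤ N, Integrable (fun x => |g x| * czw (μ.restrict S) f (j * c) x)
      (μ.restrict S) := fun j hj =>
    (cz_real_weight (μ.restrict S) hg hgi (czw_measurable _ hf _) (czw_nonneg _ f _)
      (czw_le_one _ hf (cz_ht hc h hj))).1
  have h0 : ∫ x in S, |g x| * czw (μ.restrict S) f ((0:ℕ) * c) x ∂μ = 0 := by
    have h1 : ∫ x in S, czw (μ.restrict S) f ((0:ℕ) * c) x ∂μ = 0 := by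
      rw [czw_integral _ hf (by simp) (cz_ht hc h (Nat.zero_le N))]; simp
    have h2 := (integral_eq_zero_iff_of_nonneg (czw_nonneg _ f _)
      (czw_integrable _ hf (cz_ht hc h (Nat.zero_le N)))).1 h1
    rw [integral_congr_ae (g := fun _ => 0)]
    · simp
    · filter_upwards [h2] with x hx
      rw [hx]; simp
  have h3 : ∀ j ∈ Finset.range k, ∫ x in S, |g x| * czInc μ S f c j x ∂μ
      = ∫ x in S, |g x| * czw (μ.restrict S) f ((j+1:ℕ) * c) x ∂μ
        - ∫ x in S, |g x| * czw (μ.restrict S) f (j * c) x ∂μ := by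
    intro j hj
    have hj' := Finset.mem_range.1 hj
    rw [← integral_sub (hi (j+1) (by omega)) (hi j (by omega))]
    simp only [czInc, mul_sub]
  rw [Finset.sum_congr rfl h3, Finset.sum_range_sub
    (fun j : ℕ => ∫ x in S, |g x| * czw (μ.restrict S) f (j * c) x ∂μ), h0, sub_zero]

lemma cz_core (μ : Measure α) (S0 S : Set α) (hS0 : MeasurableSet S0) (hS : MeasurableSet S)
    [IsFiniteMeasure (μ.restrict S0)] [IsFiniteMeasure (μ.restrict S)]
    (f v : α →ₘ[μ] ℝ) {g : α → ℝ} (hg : Measurable g)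
    (hfi : IntegrableOn f S μ) (hgi : IntegrableOn g S0 μ) {M : ℝ} (hM0 : 0 ≤ M)
    (hM : ∀ᵐ x ∂μ, |v x| ≤ M)
    {N : ℕ} {c : ℝ} (hc : 0 < c) (h0 : μ S0 = ENNReal.ofReal (N * c)) (h1 : μ S0 ≤ μ S)
    {δ Y : ℝ} (hδ : 0 ≤ δ)
    (hK : ∀ j : ℕ, j ≤ N → (czK (μ.restrict S0) g (ENNReal.ofReal (j * c))).toReal ≤
      (czK (μ.restrict S) f (ENNReal.ofReal (j * c))).toReal + δ)
    (hY : (czK (μ.restrict S) f (ENNReal.ofReal c)).toReal ≤ Y) :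
    ∃ β : (α →ₘ[μ] ℝ) →ₗ[ℝ] (α →ₘ[μ] ℝ) →ₗ[ℝ] ℝ, czAdm μ β ∧
      ∫ x in S0, |g x| * |v x| ∂μ ≤ β f v + M * (δ + Y) := by
  have hf := f.measurable
  have hv := v.measurable
  have hhS0 : ENNReal.ofReal (N * c) ≤ μ S0 := h0.ge
  have hhS : ENNReal.ofReal (N * c) ≤ μ S := h0.ge.trans h1
  have hY0 : 0 ≤ Y := ENNReal.toReal_nonneg.trans hY
  have hvM : ∀ᵐ x ∂(μ.restrict S0), |v x| ≤ M := ae_restrict_of_ae hM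
  have hvi : IntegrableOn v S0 μ :=
    Integrable.of_bound hv.aestronglyMeasurable M hvM
  obtain ⟨β, hβ, hval⟩ := cz_form μ N (czRho μ S f c) (czRho μ S0 v c)
    (czRho_measurable μ hS hf c) (czRho_measurable μ hS0 hv c) c hc
    (czRho_sum hf hc hhS) (czRho_sum hv hc hhS0)
    (fun j hj => czRho_lintegral hS hf hc hhS hj) (fun j hj => czRho_lintegral hS0 hv hc hhS0 hj)
  refine ⟨β, hβ, ?_⟩
  have hfw : ∀ j < N, Integrable (fun x => |f x| * czInc μ S f c j x) (μ.restrict S) ∧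
      Integrable (czInc μ S f c j) (μ.restrict S) ∧ _ := fun j hj =>
    cz_real_weight (μ.restrict S) hf hfi (czInc_measurable μ S hf c j)
      (czInc_nonneg hf hc hhS hj) (czInc_le_one hf hc hhS hj)
  have hvw : ∀ j < N, Integrable (fun x => |v x| * czInc μ S0 v c j x) (μ.restrict S0) ∧
      Integrable (czInc μ S0 v c j) (μ.restrict S0) ∧ _ := fun j hj =>
    cz_real_weight (μ.restrict S0) hv hvi (czInc_measurable μ S0 hv c j)
      (czInc_nonneg hv hc hhS0 hj) (czInc_le_one hv hc hhS0 hj)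
  have hgw : ∀ j < N, Integrable (fun x => |g x| * czInc μ S0 v c j x) (μ.restrict S0) ∧
      Integrable (czInc μ S0 v c j) (μ.restrict S0) ∧ _ := fun j hj =>
    cz_real_weight (μ.restrict S0) hg hgi (czInc_measurable μ S0 hv c j)
      (czInc_nonneg hv hc hhS0 hj) (czInc_le_one hv hc hhS0 hj)
  set x : ℕ → ℝ := fun j => ∫ x in S0, |g x| * czInc μ S0 v c j x ∂μ with hx
  set y : ℕ → ℝ := fun j => ∫ x in S, |f x| * czInc μ S f c j x ∂μ with hy
  set a : ℕ → ℝ := fun j => (decRearr (μ.restrict S0) v (j * c)).toReal with ha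
  have hafin : ∀ t, decRearr (μ.restrict S0) v t ≠ ⊤ := fun t =>
    ((cz_decRearr_le _ hvM t).trans_lt ENNReal.ofReal_lt_top).ne
  have ha_anti : ∀ j, a (j+1) ≤ a j := fun j =>
    ENNReal.toReal_mono (hafin _) (cz_decRearr_anti _ _ (by push_cast; nlinarith))
  have ha_nonneg : ∀ j, 0 ≤ a j := fun j => ENNReal.toReal_nonneg
  have ha0M : a 0 ≤ M := ENNReal.toReal_le_of_le_ofReal hM0 (cz_decRearr_le _ hvM _)
  have hxy : ∀ k ≤ N, ∑ j ∈ Finset.range k, x j ≤ ∑ j ∈ Finset.range k, y j + δ := by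
    intro k hk
    rw [hx, hy, cz_inc_sum μ S0 hv hg hgi hc hhS0 k hk, cz_inc_sum μ S hf hf hfi hc hhS k hk,
      czw_opt _ hf (cz_ht hc hhS hk)]
    refine le_trans ?_ (hK k hk)
    have := (cz_real_weight (μ.restrict S0) hg hgi (czw_measurable _ hv _) (czw_nonneg _ v _)
      (czw_le_one _ hv (cz_ht hc hhS0 hk))).2.2
    rwa [czw_integral _ hv (by positivity) (cz_ht hc hhS0 hk)] at this
  have hyY : ∀ j < N, y j ≤ Y := by
    intro j hj
    have := (hfw j hj).2.2
    rw [czInc_integral hf hc hhS hj] at this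
    exact this.trans hY
  have habel := cz_abel N a x y δ Y ha_anti ha_nonneg hδ hY0 hxy hyY
  have hform : ∑ j ∈ Finset.range N, y j * a (j+1) ≤ β f v := by
    rw [hval f v]
    · refine Finset.sum_le_sum fun j hj => ?_
      have hj' := Finset.mem_range.1 hj
      rw [czRho_mul, czRho_mul, integral_indicator hS, integral_indicator hS0]
      have hz : a (j+1) * c ≤ ∫ x in S0, |v x| * czInc μ S0 v c j x ∂μ := by
        have e0 : a (j+1) * c = ∫ x in S0, a (j+1) * czInc μ S0 v c j x ∂μ := by
          rw [integral_const_mul, czInc_integral hv hc hhS0 hj']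
        refine e0.le.trans ?_
        refine integral_mono ((hvw j hj').2.1.const_mul _) (hvw j hj').1 fun x => ?_
        show a (j+1) * czInc μ S0 v c j x ≤ |v x| * czInc μ S0 v c j x
        by_cases hz : czw (μ.restrict S0) v ((j+1:ℕ) * c) x = 0
        · have h2 := czInc_nonneg hv hc hhS0 hj' x
          have h3 : czInc μ S0 v c j x = 0 := by
            apply le_antisymm _ h2
            unfold czInc; rw [hz]
            linarith [czw_nonneg (μ.restrict S0) v (j * c) x]
          rw [h3]; simp
        · exact mul_le_mul_of_nonneg_right (czw_lower _ hz) (czInc_nonneg hv hc hhS0 hj' x)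
      have hy0 : 0 ≤ y j := integral_nonneg fun x =>
        mul_nonneg (abs_nonneg _) (czInc_nonneg hf hc hhS hj' x)
      calc y j * a (j+1) = c⁻¹ * (y j * (a (j+1) * c)) := by field_simp
        _ ≤ c⁻¹ * (y j * ∫ x in S0, |v x| * czInc μ S0 v c j x ∂μ) := by gcongr
    · intro j hj
      rw [czRho_mul, integrable_indicator_iff hS]
      exact (hfw j hj).1
    · intro j hj
      rw [czRho_mul, integrable_indicator_iff hS0]
      exact (hvw j hj).1
  have hupper : ∫ x in S0, |g x| * |v x| ∂μ ≤ ∑ j ∈ Finset.range N, a j * x j := by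
    have hw0 : ∀ᵐ x ∂(μ.restrict S0), czw (μ.restrict S0) v ((0:ℕ) * c) x = 0 := by
      have h1 : ∫ x in S0, czw (μ.restrict S0) v ((0:ℕ) * c) x ∂μ = 0 := by
        rw [czw_integral _ hv (by simp) (cz_ht hc hhS0 (Nat.zero_le N))]; simp
      exact (integral_eq_zero_iff_of_nonneg (czw_nonneg _ v _)
        (czw_integrable _ hv (cz_ht hc hhS0 (Nat.zero_le N)))).1 h1
    have hw1 : ∀ᵐ x ∂(μ.restrict S0), czw (μ.restrict S0) v (N * c) x = 1 := by
      have hint := czw_integrable (μ.restrict S0) hv (cz_ht hc hhS0 le_rfl)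
      have h1 : ∫ x in S0, (1 - czw (μ.restrict S0) v (N * c) x) ∂μ = 0 := by
        rw [integral_sub (integrable_const _) hint,
          czw_integral _ hv (by positivity) (cz_ht hc hhS0 le_rfl)]
        simp [Measure.real, h0, ENNReal.toReal_ofReal hc.le]
      have h2 := (integral_eq_zero_iff_of_nonneg
        (fun x => sub_nonneg.2 (czw_le_one _ hv (cz_ht hc hhS0 le_rfl) x))
        ((integrable_const _).sub hint)).1 h1
      filter_upwards [h2] with x hx
      have : 1 - czw (μ.restrict S0) v (N * c) x = 0 := hx
      linarith
    have e1 : ∑ j ∈ Finset.range N, a j * x j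
        = ∫ x in S0, ∑ j ∈ Finset.range N, a j * (|g x| * czInc μ S0 v c j x) ∂μ := by
      rw [integral_finsetSum _ fun j hj => (hgw j (Finset.mem_range.1 hj)).1.const_mul _]
      refine Finset.sum_congr rfl fun j _ => ?_
      rw [integral_const_mul]
    rw [e1]
    refine integral_mono_ae ?_ ?_ ?_
    · refine Integrable.mono' (hgi.abs.const_mul M) (by fun_prop) ?_
      filter_upwards [hvM] with x hx
      rw [Real.norm_eq_abs, abs_mul, abs_abs, abs_abs, mul_comm]
      gcongr
    · exact integrable_finsetSum _ fun j hj => (hgw j (Finset.mem_range.1 hj)).1.const_mul _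
    · filter_upwards [hw0, hw1] with x hx0 hx1
      have e2 : ∑ j ∈ Finset.range N, czInc μ S0 v c j x = 1 := by
        simp only [czInc]
        rw [Finset.sum_range_sub (fun j : ℕ => czw (μ.restrict S0) v (j * c) x), hx0, hx1]; simp
      calc |g x| * |v x| = ∑ j ∈ Finset.range N, |g x| * |v x| * czInc μ S0 v c j x := by
            rw [← Finset.mul_sum, e2, mul_one]
        _ ≤ _ := by
            refine Finset.sum_le_sum fun j hj => ?_
            have hj' := Finset.mem_range.1 hj
            have hn := czInc_nonneg hv hc hhS0 hj' x
            by_cases hz : czw (μ.restrict S0) v (j * c) x = 1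
            · have h3 : czInc μ S0 v c j x = 0 := by
                apply le_antisymm _ hn
                unfold czInc; rw [hz]
                linarith [czw_le_one _ hv (cz_ht hc hhS0 (show j + 1 ≤ N from hj')) x]
              rw [h3]; simp
            · have h3 : |v x| ≤ a j := czw_upper _ (hafin _) hz
              calc _ = |v x| * (|g x| * czInc μ S0 v c j x) := by ring
                _ ≤ a j * (|g x| * czInc μ S0 v c j x) := by gcongr
  have : a 0 * (δ + Y) ≤ M * (δ + Y) := by gcongr
  linarith

end

section
variable {α : Type*} [MeasurableSpace α]

lemma cz_dist_meas (μ : Measure α) (f : α → ℝ) (t : ℝ≥0∞) :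
    Measurable (fun l : ℝ => min t (μ {x | ENNReal.ofReal l < (‖f x‖₊ : ℝ≥0∞)})) := by
  apply Antitone.measurable
  intro l l' h
  refine min_le_min_left _ (measure_mono fun x hx => ?_)
  exact lt_of_le_of_lt (ENNReal.ofReal_le_ofReal h) hx

/-- exhaustion of the K-functional -/
lemma cz_K_exhaust (μ : Measure α) [SigmaFinite μ] (f : α → ℝ) (hf : Measurable f) (t : ℝ≥0∞) :
    Filter.Tendsto (fun k => czK (μ.restrict (spanningSets μ k)) f t) Filter.atTop
      (nhds (czK μ f t)) := by
  refine lintegral_tendsto_of_tendsto_of_monotone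
    (fun k => (cz_dist_meas _ f t).aemeasurable) ?_ ?_
  · refine Filter.Eventually.of_forall fun l => fun i j hij => ?_
    exact min_le_min_left _ (Measure.restrict_mono (monotone_spanningSets μ hij) le_rfl _)
  · refine Filter.Eventually.of_forall fun l => ?_
    refine Filter.Tendsto.min tendsto_const_nhds ?_
    have hm : MeasurableSet {x | ENNReal.ofReal l < (‖f x‖₊ : ℝ≥0∞)} :=
      measurableSet_lt measurable_const (by fun_prop)
    simp_rw [Measure.restrict_apply hm]
    have : {x | ENNReal.ofReal l < (‖f x‖₊ : ℝ≥0∞)} =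
        ⋃ k, {x | ENNReal.ofReal l < (‖f x‖₊ : ℝ≥0∞)} ∩ spanningSets μ k := by
      rw [← Set.inter_iUnion, iUnion_spanningSets, Set.inter_univ]
    conv => rhs; rw [this]
    exact tendsto_measure_iUnion_atTop fun i j hij =>
      Set.inter_subset_inter_right _ (monotone_spanningSets μ hij)

lemma cz_K_transfer (μ ν : Measure α) (f : α → ℝ) (h : ν ≤ μ) {t m δ : ℝ≥0∞} (htm : t ≤ m)
    (hfin : czK μ f m ≠ ⊤) (hm : czK μ f m ≤ czK ν f m + δ) :
    czK μ f t ≤ czK ν f t + δ := by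
  have key : czK μ f t + czK ν f m ≤ czK ν f t + czK μ f m := by
    unfold czK
    rw [← lintegral_add_left (cz_dist_meas _ _ _), ← lintegral_add_left (cz_dist_meas _ _ _)]
    refine lintegral_mono fun l => ?_
    have hh := h {x | ENNReal.ofReal l < (‖f x‖₊ : ℝ≥0∞)}
    simp only
    generalize μ {x | ENNReal.ofReal l < (‖f x‖₊ : ℝ≥0∞)} = a at *
    generalize ν {x | ENNReal.ofReal l < (‖f x‖₊ : ℝ≥0∞)} = b at *
    rcases le_total t b with h1 | h1
    · rw [min_eq_left (h1.trans hh), min_eq_left h1]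
      gcongr
    · rw [min_eq_right h1, min_eq_right (h1.trans htm), add_comm]
      gcongr
  have hn : czK ν f m ≠ ⊤ := ne_top_of_le_ne_top hfin (czK_mono_left h m)
  refine (ENNReal.add_le_add_iff_right hn).1 (key.trans ?_)
  calc czK ν f t + czK μ f m ≤ czK ν f t + (czK ν f m + δ) := by gcongr
    _ = _ := by ring

lemma cz_K_small (μ : Measure α) (f : α → ℝ) {m : ℝ} 
    (hfin : czK μ f (ENNReal.ofReal m) ≠ ⊤) :
    Filter.Tendsto (fun N : ℕ => czK μ f (ENNReal.ofReal (m / N))) Filter.atTop (nhds 0) := by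
  have : (0:ℝ≥0∞) = ∫⁻ l in Set.Ioi (0:ℝ), (0:ℝ≥0∞) := by simp
  rw [this]
  refine tendsto_lintegral_filter_of_dominated_convergence'
    (fun l => min (ENNReal.ofReal m) (μ {x | ENNReal.ofReal l < (‖f x‖₊ : ℝ≥0∞)}))
    (Filter.Eventually.of_forall fun N => (cz_dist_meas _ _ _).aemeasurable) ?_ hfin ?_
  · filter_upwards [Filter.eventually_ge_atTop 1] with N hN
    refine Filter.Eventually.of_forall fun l => ?_
    refine min_le_min_right _ ?_
    rcases le_total 0 m with h | h
    · exact ENNReal.ofReal_le_ofReal (div_le_self h (by exact_mod_cast hN))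
    · rw [ENNReal.ofReal_of_nonpos (div_nonpos_of_nonpos_of_nonneg h (by positivity))]; simp
  · refine Filter.Eventually.of_forall fun l => ?_
    have h1 : Filter.Tendsto (fun N : ℕ => ENNReal.ofReal (m / N)) Filter.atTop (nhds 0) := by
      have := (ENNReal.continuous_ofReal.tendsto 0).comp (tendsto_const_div_atTop_nhds_zero_nat m)
      simpa [Function.comp_def] using this
    exact tendsto_of_tendsto_of_tendsto_of_le_of_le tendsto_const_nhds h1 (fun _ => zero_le)
      (fun _ => min_le_left _ _)

lemma cz_K_integrableOn (μ : Measure α) {f : α → ℝ} (hf : Measurable f) (S : Set α)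
    [IsFiniteMeasure (μ.restrict S)]
    (hfin : ∀ t : ℝ, 0 ≤ t → czK μ f (ENNReal.ofReal t) ≠ ⊤) : IntegrableOn f S μ := by
  refine ⟨hf.aestronglyMeasurable, ?_⟩
  have h1 := cz_weight_le (μ.restrict S) hf (W := fun _ => 1) measurable_const (fun _ => le_rfl)
  simp only [mul_one] at h1
  refine lt_of_le_of_lt h1 ?_
  refine lt_of_le_of_lt (czK_mono_left Measure.restrict_le_self _) ?_
  have h2 : ∫⁻ _, 1 ∂(μ.restrict S) ≠ ⊤ := by
    rw [lintegral_one]; exact measure_ne_top _ _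
  rw [← ENNReal.ofReal_toReal h2]
  exact lt_top_iff_ne_top.2 (hfin _ ENNReal.toReal_nonneg)

lemma cz_key (μ : Measure α) [SigmaFinite μ] (f g v : α →ₘ[μ] ℝ) {M : ℝ} (hM0 : 0 ≤ M)
    (hM : ∀ᵐ x ∂μ, |v x| ≤ M)
    (hfin : ∀ t : ℝ, 0 ≤ t → czK μ f (ENNReal.ofReal t) ≠ ⊤)
    (hle : ∀ t : ℝ, 0 ≤ t → czK μ g (ENNReal.ofReal t) ≤ czK μ f (ENNReal.ofReal t))
    (n : ℕ) {δ : ℝ} (hδ : 0 < δ) :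
    IntegrableOn (fun x => |g x| * |v x|) (spanningSets μ n) μ ∧
    ∃ β : (α →ₘ[μ] ℝ) →ₗ[ℝ] (α →ₘ[μ] ℝ) →ₗ[ℝ] ℝ, czAdm μ β ∧
      ∫ x in spanningSets μ n, |g x| * |v x| ∂μ ≤ β f v + M * (δ + δ) := by
  have hf := f.measurable
  have hg := g.measurable
  have hv := v.measurable
  have hfm : ∀ k, IsFiniteMeasure (μ.restrict (spanningSets μ k)) := fun k =>
    ⟨by simpa using measure_spanningSets_lt_top μ k⟩
  have hgfin : ∀ t : ℝ, 0 ≤ t → czK μ g (ENNReal.ofReal t) ≠ ⊤ := fun t ht =>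
    ne_top_of_le_ne_top (hfin t ht) (hle t ht)
  have hgi : IntegrableOn g (spanningSets μ n) μ := cz_K_integrableOn μ hg _ hgfin
  refine ⟨?_, ?_⟩
  · refine Integrable.mono' (hgi.abs.const_mul M) (by fun_prop) ?_
    filter_upwards [ae_restrict_of_ae hM] with x hx
    rw [Real.norm_eq_abs, abs_mul, abs_abs, abs_abs, mul_comm]
    gcongr
  by_cases hz : μ (spanningSets μ n) = 0
  · refine ⟨0, ⟨by simp, by simp⟩, ?_⟩
    rw [Measure.restrict_eq_zero.2 hz]; simp; positivity
  set m : ℝ := (μ (spanningSets μ n)).toReal with hm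
  have hmt : μ (spanningSets μ n) ≠ ⊤ := (measure_spanningSets_lt_top μ n).ne
  have hm0 : 0 < m := ENNReal.toReal_pos hz hmt
  have hmm : μ (spanningSets μ n) = ENNReal.ofReal m := (ENNReal.ofReal_toReal hmt).symm
  have hδ' : (0:ℝ≥0∞) < ENNReal.ofReal δ := ENNReal.ofReal_pos.2 hδ
  obtain ⟨k, hk, hkn⟩ : ∃ k, czK μ f (ENNReal.ofReal m) ≤
      czK (μ.restrict (spanningSets μ k)) f (ENNReal.ofReal m) + ENNReal.ofReal δ ∧ n ≤ k := by
    have h1 := (cz_K_exhaust μ f hf (ENNReal.ofReal m)).add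
      (tendsto_const_nhds (x := ENNReal.ofReal δ))
    have h2 : czK μ f (ENNReal.ofReal m) < czK μ f (ENNReal.ofReal m) + ENNReal.ofReal δ :=
      ENNReal.lt_add_right (hfin m hm0.le) hδ'.ne'
    exact (((h1.eventually (lt_mem_nhds h2)).mono fun k hk => hk.le).and
      (Filter.eventually_ge_atTop n)).exists
  obtain ⟨N, hN, hN1⟩ : ∃ N : ℕ, czK μ f (ENNReal.ofReal (m / N)) ≤ ENNReal.ofReal δ ∧ 1 ≤ N :=
    ((((cz_K_small μ f (hfin m hm0.le)).eventually (gt_mem_nhds hδ')).mono fun k hk => hk.le).and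
      (Filter.eventually_ge_atTop 1)).exists
  have hN0 : (0:ℝ) < N := by exact_mod_cast hN1
  have hc : 0 < m / N := div_pos hm0 hN0
  have hNc : N * (m / N) = m := by field_simp
  have hr : ∀ i, μ.restrict (spanningSets μ i) ≤ μ := fun i => Measure.restrict_le_self
  refine cz_core μ (spanningSets μ n) (spanningSets μ k) (measurableSet_spanningSets μ n)
    (measurableSet_spanningSets μ k) f v hg (cz_K_integrableOn μ hf _ hfin) hgi hM0 hM hc
    (by rw [hNc, hmm]) (measure_mono (monotone_spanningSets μ hkn)) hδ.le ?_ ?_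
  · intro j hj
    have hj' : (j:ℝ) ≤ N := by exact_mod_cast hj
    have ht0 : 0 ≤ j * (m / N) := by positivity
    have htm : j * (m / N) ≤ m := by
      calc j * (m / N) ≤ N * (m / N) := by gcongr
        _ = m := hNc
    have h1 := ((czK_mono_left (f := g) (hr n) (ENNReal.ofReal (j * (m / N)))).trans
      (hle _ ht0)).trans
      (cz_K_transfer μ _ f (hr k) (ENNReal.ofReal_le_ofReal htm) (hfin m hm0.le) hk)
    have h2 : czK (μ.restrict (spanningSets μ k)) f (ENNReal.ofReal (j * (m / N))) ≠ ⊤ :=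
      ne_top_of_le_ne_top (hfin _ ht0) (czK_mono_left (hr k) _)
    have h3 := ENNReal.toReal_mono (ENNReal.add_ne_top.2 ⟨h2, ENNReal.ofReal_ne_top⟩) h1
    rwa [ENNReal.toReal_add h2 (by simp), ENNReal.toReal_ofReal hδ.le] at h3
  · exact ENNReal.toReal_le_of_le_ofReal hδ.le ((czK_mono_left (hr k) _).trans hN)

/-- The bound by the admissible forms. -/
lemma cz_key_bound (μ : Measure α) [SigmaFinite μ] (f g v : α →ₘ[μ] ℝ) 
    (hv : MemLp v ⊤ μ)
    (hfin : ∀ t : ℝ, 0 ≤ t → czK μ f (ENNReal.ofReal t) ≠ ⊤)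
    (hle : ∀ t : ℝ, 0 ≤ t → czK μ g (ENNReal.ofReal t) ≤ czK μ f (ENNReal.ofReal t))
    {C : ℝ} (hC : ∀ β : (α →ₘ[μ] ℝ) →ₗ[ℝ] (α →ₘ[μ] ℝ) →ₗ[ℝ] ℝ, czAdm μ β → |β f v| ≤ C) :
    Integrable (fun x => v x * g x) μ ∧ |∫ x, v x * g x ∂μ| ≤ C := by
  set M := (eLpNorm v ⊤ μ).toReal with hMdef
  have hM : ∀ᵐ x ∂μ, |v x| ≤ M := by
    have : ∀ᵐ x ∂μ, ‖v x‖ₑ ≤ eLpNorm v ⊤ μ := by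
      rw [eLpNorm_exponent_top]; exact ae_le_eLpNormEssSup
    filter_upwards [this] with x hx
    have := ENNReal.toReal_mono hv.2.ne hx
    rwa [toReal_enorm, Real.norm_eq_abs] at this
  have hM0 : 0 ≤ M := ENNReal.toReal_nonneg
  have hgm := g.measurable
  have hvm := v.measurable
  have hC0 : 0 ≤ C := by simpa using hC 0 ⟨by simp, by simp⟩
  have hn : ∀ n, ∫⁻ x in spanningSets μ n, ‖v x * g x‖ₑ ∂μ ≤ ENNReal.ofReal C := by
    intro n
    have hint := (cz_key μ f g v hM0 hM hfin hle n one_pos).1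
    have e : ∫⁻ x in spanningSets μ n, ‖v x * g x‖ₑ ∂μ
        = ENNReal.ofReal (∫ x in spanningSets μ n, |g x| * |v x| ∂μ) := by
      rw [ofReal_integral_eq_lintegral_ofReal hint
        (Filter.Eventually.of_forall fun x => by positivity)]
      refine lintegral_congr fun x => ?_
      rw [← abs_mul, ← Real.norm_eq_abs, ofReal_norm, mul_comm]
    rw [e]
    refine ENNReal.ofReal_le_ofReal ?_
    refine le_of_forall_pos_le_add fun ε hε => ?_
    set δ := ε / (2 * (M + 1)) with hδ
    obtain ⟨β, hβ, hb⟩ := (cz_key μ f g v hM0 hM hfin hle n (show 0 < δ by positivity)).2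
    have h1 := (le_abs_self _).trans (hC β hβ)
    have h2 : M * (δ + δ) ≤ ε := by
      have : (M + 1) * (δ + δ) = ε := by rw [hδ]; field_simp; ring
      have hδ0 : 0 < δ := by positivity
      nlinarith
    linarith
  have hall : ∫⁻ x, ‖v x * g x‖ₑ ∂μ ≤ ENNReal.ofReal C := by
    rw [← setLIntegral_univ, ← iUnion_spanningSets μ,
      setLIntegral_iUnion_of_directed _ (monotone_spanningSets μ).directed_le]
    exact iSup_le hn
  have hint : Integrable (fun x => v x * g x) μ :=
    ⟨by fun_prop, lt_of_le_of_lt hall ENNReal.ofReal_lt_top⟩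
  refine ⟨hint, ?_⟩
  have h1 := (enorm_integral_le_lintegral_enorm (fun x => v x * g x) (μ := μ)).trans hall
  have := ENNReal.toReal_mono (by simp) h1
  rw [ENNReal.toReal_ofReal hC0] at this
  simpa using this
end

lemma cz_hb {E V : Type*} [NormedAddCommGroup E] [NormedSpace ℝ E] [AddCommGroup V] [Module ℝ V]
    (Ψ : V →ₗ[ℝ] E) (L0 : V →ₗ[ℝ] ℝ) (hnorm : ∀ v, |L0 v| ≤ ‖Ψ v‖) :
    ∃ g : E →ₗ[ℝ] ℝ, (∀ x, |g x| ≤ ‖x‖) ∧ ∀ v, g (Ψ v) = L0 v := by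
  have hker : LinearMap.ker Ψ ≤ LinearMap.ker L0 := by
    intro v hv
    have h2 := hnorm v
    rw [LinearMap.mem_ker.1 hv, norm_zero] at h2
    exact LinearMap.mem_ker.2 (abs_eq_zero.1 (le_antisymm h2 (abs_nonneg _)))
  let l0 : LinearMap.range Ψ →ₗ[ℝ] ℝ :=
    (LinearMap.ker Ψ).liftQ L0 hker ∘ₗ Ψ.quotKerEquivRange.symm.toLinearMap
  have hl0 : ∀ v, l0 ⟨Ψ v, LinearMap.mem_range_self _ v⟩ = L0 v := by
    intro v
    show (LinearMap.ker Ψ).liftQ L0 hker (Ψ.quotKerEquivRange.symm ⟨Ψ v, _⟩) = L0 v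
    rw [LinearMap.quotKerEquivRange_symm_apply_image]
    simp
  have hl0n : ∀ y : LinearMap.range Ψ, ‖l0 y‖ ≤ 1 * ‖y‖ := by
    rintro ⟨y, v, rfl⟩
    rw [one_mul, hl0 v]
    exact hnorm v
  let l : StrongDual ℝ (LinearMap.range Ψ) := LinearMap.mkContinuous l0 1 hl0n
  have hl : ∀ v, l ⟨Ψ v, LinearMap.mem_range_self _ v⟩ = L0 v := hl0
  have hl1 : ‖l‖ ≤ 1 := LinearMap.mkContinuous_norm_le _ zero_le_one _
  obtain ⟨g, hg, hgn⟩ := exists_extension_norm_eq (LinearMap.range Ψ) l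
  refine ⟨g.toLinearMap, fun x => ?_, fun v => ?_⟩
  · have h1 := g.le_opNorm x
    rw [hgn] at h1
    refine h1.trans ?_
    calc ‖l‖ * ‖x‖ ≤ 1 * ‖x‖ := by gcongr
      _ = ‖x‖ := one_mul _
  · rw [← hl v, ← hg]; rfl

lemma cz_mean {ι V : Type*} [AddCommGroup V] [Module ℝ V]
    (Φ : V →ₗ[ℝ] (ι → ℝ)) (L0 : V →ₗ[ℝ] ℝ)
    (hb : ∀ v, ∃ C, ∀ i, |Φ v i| ≤ C)
    (hL : ∀ v C, (∀ i, |Φ v i| ≤ C) → |L0 v| ≤ C) :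
    ∃ Λ : (ι → ℝ) →ₗ[ℝ] ℝ, (∀ φ C, 0 ≤ C → (∀ i, |φ i| ≤ C) → |Λ φ| ≤ C) ∧
      ∀ v, Λ (Φ v) = L0 v := by
  classical
  let _ : TopologicalSpace ι := ⊥
  have : DiscreteTopology ι := ⟨rfl⟩
  let mk : (φ : ι → ℝ) → (C : ℝ) → (∀ i, |φ i| ≤ C) → BoundedContinuousFunction ι ℝ :=
    fun φ C h => BoundedContinuousFunction.ofNormedAddCommGroupDiscrete φ C h
  let J : BoundedContinuousFunction ι ℝ →ₗ[ℝ] (ι → ℝ) :=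
    { toFun := fun φ => φ, map_add' := fun _ _ => rfl, map_smul' := fun _ _ => rfl }
  have hJ : Function.Injective J := fun a b h => DFunLike.coe_injective h
  choose C hC using hb
  let Ψ : V →ₗ[ℝ] BoundedContinuousFunction ι ℝ :=
    { toFun := fun v => mk (Φ v) (C v) (hC v)
      map_add' := fun a b => by
        apply hJ; show Φ (a + b) = Φ a + Φ b; simp
      map_smul' := fun r a => by
        apply hJ; show Φ (r • a) = r • Φ a; simp }
  have hΨ : ∀ v, J (Ψ v) = Φ v := fun v => rfl
  have hnorm : ∀ v, |L0 v| ≤ ‖Ψ v‖ := fun v => hL v _ fun i => (Ψ v).norm_coe_le_norm i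
  obtain ⟨g, hg1, hg⟩ := cz_hb Ψ L0 hnorm
  obtain ⟨p, hp⟩ := LinearMap.exists_leftInverse_of_injective J (LinearMap.ker_eq_bot.2 hJ)
  refine ⟨g ∘ₗ p, ?_, ?_⟩
  · intro φ C hC0 h
    have e : p φ = mk φ C h := LinearMap.congr_fun hp (mk φ C h)
    show |g (p φ)| ≤ C
    rw [e]
    exact (hg1 _).trans ((BoundedContinuousFunction.norm_le hC0).2 h)
  · intro v
    show g (p (Φ v)) = L0 v
    have e : p (Φ v) = Ψ v := LinearMap.congr_fun hp (Ψ v)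
    rw [e]; exact hg v

section
variable {α : Type*} [MeasurableSpace α]

/-- The space `L^p` as a submodule of the space of all measurable functions. -/
def czL (μ : Measure α) (p : ℝ≥0∞) : Submodule ℝ (α →ₘ[μ] ℝ) where
  carrier := {u | MemLp u p μ}
  zero_mem' := by
    show MemLp ((0 : α →ₘ[μ] ℝ) : α → ℝ) p μ
    exact (memLp_congr_ae AEEqFun.coeFn_zero).2 MemLp.zero
  add_mem' := fun {a b} ha hb => by
    show MemLp ((a + b : α →ₘ[μ] ℝ) : α → ℝ) p μ
    exact (memLp_congr_ae (AEEqFun.coeFn_add a b)).2 (MemLp.add ha hb)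
  smul_mem' := fun r a ha => by
    show MemLp ((r • a : α →ₘ[μ] ℝ) : α → ℝ) p μ
    exact (memLp_congr_ae (AEEqFun.coeFn_smul r a)).2 (MemLp.const_smul ha r)

lemma mem_czL {μ : Measure α} {p : ℝ≥0∞} {u : α →ₘ[μ] ℝ} : u ∈ czL μ p ↔ MemLp u p μ := Iff.rfl

lemma cz_mean_form (μ : Measure α) [SigmaFinite μ] (f f1 f2 g : α →ₘ[μ] ℝ)
    (hf : f = f1 + f2) (h1 : MemLp f1 1 μ) (h2 : MemLp f2 ⊤ μ)
    (hle : ∀ t : ℝ, 0 ≤ t → czK μ g (ENNReal.ofReal t) ≤ czK μ f (ENNReal.ofReal t)) :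
    ∃ β : (α →ₘ[μ] ℝ) →ₗ[ℝ] (α →ₘ[μ] ℝ) →ₗ[ℝ] ℝ, czAdm μ β ∧
      ∀ v : α →ₘ[μ] ℝ, MemLp v 1 μ → MemLp v ⊤ μ →
        Integrable (fun x => v x * g x) μ ∧ β f v = ∫ x, v x * g x ∂μ := by
  have hfin : ∀ t : ℝ, 0 ≤ t → czK μ f (ENNReal.ofReal t) ≠ ⊤ := fun t ht => by
    have hae : ∀ᵐ x ∂μ, f x = f1 x + f2 x := by rw [hf]; exact AEEqFun.coeFn_add f1 f2
    refine ne_top_of_le_ne_top ?_ (cz_K_le_add μ f.measurable hae _)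
    exact ENNReal.add_ne_top.2 ⟨h1.2.ne, ENNReal.mul_ne_top ENNReal.ofReal_ne_top h2.2.ne⟩
  let V : Submodule ℝ (α →ₘ[μ] ℝ) := czL μ 1 ⊓ czL μ ⊤
  let ι := {β : (α →ₘ[μ] ℝ) →ₗ[ℝ] (α →ₘ[μ] ℝ) →ₗ[ℝ] ℝ // czAdm μ β}
  have hbd : ∀ v : α →ₘ[μ] ℝ, MemLp v 1 μ → MemLp v ⊤ μ → ∃ C, ∀ i : ι, |i.1 f v| ≤ C := by
    intro v hv1 hv2
    refine ⟨(eLpNorm f1 1 μ * eLpNorm v ⊤ μ + eLpNorm f2 ⊤ μ * eLpNorm v 1 μ).toReal, fun i => ?_⟩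
    have e : ‖i.1 f v‖ₑ ≤ eLpNorm f1 1 μ * eLpNorm v ⊤ μ + eLpNorm f2 ⊤ μ * eLpNorm v 1 μ := by
      rw [hf, map_add, LinearMap.add_apply]
      exact (enorm_add_le _ _).trans (add_le_add (i.2.1 f1 v h1 hv2) (i.2.2 f2 v h2 hv1))
    have := ENNReal.toReal_mono (ENNReal.add_ne_top.2
      ⟨ENNReal.mul_ne_top h1.2.ne hv2.2.ne, ENNReal.mul_ne_top h2.2.ne hv1.2.ne⟩) e
    rwa [toReal_enorm, Real.norm_eq_abs] at this
  obtain ⟨F, hF⟩ := cz_functional μ g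
  let Φ0 : (α →ₘ[μ] ℝ) →ₗ[ℝ] (α →ₘ[μ] ℝ) →ₗ[ℝ] (ι → ℝ) :=
    LinearMap.mk₂ ℝ (fun u v i => i.1 u v) (fun a b c => by ext i; simp)
      (fun r a b => by ext i; simp) (fun a b c => by ext i; simp) (fun r a b => by ext i; simp)
  obtain ⟨Λ, hΛ, hΛv⟩ := cz_mean (Φ0 f ∘ₗ V.subtype) (F ∘ₗ V.subtype)
    (fun v => hbd v v.2.1 v.2.2) (fun v C hC => by
      obtain ⟨hi, hle'⟩ := cz_key_bound μ f g v v.2.2 hfin hle (fun β hβ => hC ⟨β, hβ⟩)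
      show |F v| ≤ C
      rwa [hF _ hi])
  refine ⟨Φ0.compr₂ Λ, ⟨?_, ?_⟩, ?_⟩
  · intro u v hu hv
    have hne := ENNReal.mul_ne_top hu.2.ne hv.2.ne
    rw [← ofReal_norm]
    refine ENNReal.ofReal_le_of_le_toReal ?_
    refine hΛ _ _ ENNReal.toReal_nonneg fun i => ?_
    have := ENNReal.toReal_mono hne (i.2.1 u v hu hv)
    rwa [toReal_enorm, Real.norm_eq_abs] at this
  · intro u v hu hv
    have hne := ENNReal.mul_ne_top hu.2.ne hv.2.ne
    rw [← ofReal_norm]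
    refine ENNReal.ofReal_le_of_le_toReal ?_
    refine hΛ _ _ ENNReal.toReal_nonneg fun i => ?_
    have := ENNReal.toReal_mono hne (i.2.2 u v hu hv)
    rwa [toReal_enorm, Real.norm_eq_abs] at this
  · intro v hv1 hv2
    obtain ⟨C, hC⟩ := hbd v hv1 hv2
    have hi := (cz_key_bound μ f g v hv2 hfin hle (fun β hβ => hC ⟨β, hβ⟩)).1
    refine ⟨hi, ?_⟩
    rw [← hF v hi]
    exact hΛv ⟨v, hv1, hv2⟩
end

section
variable {α : Type*} [MeasurableSpace α]

/-- Multiplication by a fixed function, from `L²`. -/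
noncomputable def czMul (μ : Measure α) (S : α →ₘ[μ] ℝ) : Lp ℝ 2 μ →ₗ[ℝ] (α →ₘ[μ] ℝ) where
  toFun w := (w : α →ₘ[μ] ℝ) * S
  map_add' a b := by
    show ((a : α →ₘ[μ] ℝ) + (b : α →ₘ[μ] ℝ)) * S = _
    apply AEEqFun.ext
    filter_upwards [AEEqFun.coeFn_mul ((a : α →ₘ[μ] ℝ) + (b : α →ₘ[μ] ℝ)) S,
      AEEqFun.coeFn_add (a : α →ₘ[μ] ℝ) (b : α →ₘ[μ] ℝ),
      AEEqFun.coeFn_add ((a : α →ₘ[μ] ℝ) * S) ((b : α →ₘ[μ] ℝ) * S),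
      AEEqFun.coeFn_mul (a : α →ₘ[μ] ℝ) S, AEEqFun.coeFn_mul (b : α →ₘ[μ] ℝ) S]
      with x h1 h2 h3 h4 h5
    rw [h1, h3, Pi.mul_apply, Pi.add_apply, h2, h4, h5]
    simp only [Pi.mul_apply, Pi.add_apply]
    ring
  map_smul' r a := by
    show (r • (a : α →ₘ[μ] ℝ)) * S = r • ((a : α →ₘ[μ] ℝ) * S)
    apply AEEqFun.ext
    filter_upwards [AEEqFun.coeFn_mul (r • (a : α →ₘ[μ] ℝ)) S,
      AEEqFun.coeFn_smul r (a : α →ₘ[μ] ℝ), AEEqFun.coeFn_smul r ((a : α →ₘ[μ] ℝ) * S),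
      AEEqFun.coeFn_mul (a : α →ₘ[μ] ℝ) S] with x h1 h2 h3 h4
    rw [h1, h3, Pi.mul_apply, Pi.smul_apply, h2, h4]
    simp only [Pi.mul_apply, Pi.smul_apply, smul_eq_mul]
    ring

lemma cz_rep (μ : Measure α) (β : (α →ₘ[μ] ℝ) →ₗ[ℝ] (α →ₘ[μ] ℝ) →ₗ[ℝ] ℝ) (hβ : czAdm μ β)
    {s : α → ℝ} (hs : Measurable s) (hpos : ∀ x, 0 < s x) (hs2 : MemLp s 2 μ) :
    ∃ T0 : czL μ ⊤ →ₗ[ℝ] (α →ₘ[μ] ℝ), ∀ u : czL μ ⊤, ∀ v : α →ₘ[μ] ℝ, ∀ C : ℝ,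
      (∀ᵐ x ∂μ, |v x| ≤ C * s x ^ 2) →
      Integrable (fun x => T0 u x * v x) μ ∧ β u v = ∫ x, T0 u x * v x ∂μ := by
  let S : α →ₘ[μ] ℝ := AEEqFun.mk s hs.aestronglyMeasurable
  let S' : α →ₘ[μ] ℝ := AEEqFun.mk (fun x => (s x)⁻¹) hs.inv.aestronglyMeasurable
  have hS : ∀ᵐ x ∂μ, S x = s x := AEEqFun.coeFn_mk _ _
  have hS' : ∀ᵐ x ∂μ, S' x = (s x)⁻¹ := AEEqFun.coeFn_mk _ _
  have hmul : ∀ w : Lp ℝ 2 μ, ∀ᵐ x ∂μ, (czMul μ S w) x = w x * s x := by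
    intro w
    filter_upwards [AEEqFun.coeFn_mul (w : α →ₘ[μ] ℝ) S, hS] with x h1 h2
    show ((w : α →ₘ[μ] ℝ) * S) x = _
    rw [h1, Pi.mul_apply, h2]
  have hn1 : ∀ w : Lp ℝ 2 μ, MemLp (czMul μ S w) 1 μ ∧
      eLpNorm (czMul μ S w) 1 μ ≤ eLpNorm w 2 μ * eLpNorm s 2 μ := by
    intro w
    have h1 : eLpNorm (czMul μ S w) 1 μ ≤ eLpNorm w 2 μ * eLpNorm s 2 μ := by
      rw [eLpNorm_congr_ae (hmul w)]
      exact eLpNorm_smul_le_mul_eLpNorm (f := s) (φ := w) hs.aestronglyMeasurable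
        (Lp.aestronglyMeasurable w)
    exact ⟨⟨AEEqFun.aestronglyMeasurable _,
      h1.trans_lt (ENNReal.mul_lt_top (Lp.memLp w).2 hs2.2)⟩, h1⟩
  have hbd : ∀ u : czL μ ⊤, ∀ w : Lp ℝ 2 μ, ‖(β u ∘ₗ czMul μ S) w‖ ≤
      ((eLpNorm (u : α →ₘ[μ] ℝ) ⊤ μ).toReal * (eLpNorm s 2 μ).toReal) * ‖w‖ := by
    intro u w
    have h1 := hβ.2 u (czMul μ S w) u.2 (hn1 w).1
    have h2 : ‖β u (czMul μ S w)‖ₑ ≤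
        eLpNorm (u : α →ₘ[μ] ℝ) ⊤ μ * (eLpNorm w 2 μ * eLpNorm s 2 μ) :=
      h1.trans (by gcongr; exact (hn1 w).2)
    have h3 := ENNReal.toReal_mono (ENNReal.mul_ne_top u.2.2.ne
      (ENNReal.mul_ne_top (Lp.memLp w).2.ne hs2.2.ne)) h2
    rw [toReal_enorm, ENNReal.toReal_mul, ENNReal.toReal_mul] at h3
    rw [Lp.norm_def]
    refine h3.trans (le_of_eq (by ring))
  let D : czL μ ⊤ → StrongDual ℝ (Lp ℝ 2 μ) := fun u =>
    LinearMap.mkContinuous (β u ∘ₗ czMul μ S) _ (hbd u)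
  have hD : ∀ u w, D u w = β u (czMul μ S w) := fun u w => rfl
  let R : czL μ ⊤ →ₗ[ℝ] Lp ℝ 2 μ :=
    { toFun := fun u => (InnerProductSpace.toDual ℝ (Lp ℝ 2 μ)).symm (D u)
      map_add' := fun a b => by
        rw [← map_add]; congr 1; ext w
        simp [hD]
      map_smul' := fun r a => by
        have : D (r • a) = r • D a := by
          ext w; simp [hD]
        rw [this]; simp }
  have hR : ∀ u w, inner ℝ (R u) w = β u (czMul μ S w) := by
    intro u w
    show inner ℝ ((InnerProductSpace.toDual ℝ (Lp ℝ 2 μ)).symm (D u)) w = _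
    rw [InnerProductSpace.toDual_symm_apply, hD]
  refine ⟨{ toFun := fun u => czMul μ S' (R u), map_add' := by simp, map_smul' := by simp }, ?_⟩
  intro u v C hv
  show Integrable (fun x => czMul μ S' (R u) x * v x) μ ∧
    β u v = ∫ x, czMul μ S' (R u) x * v x ∂μ
  have hw : MemLp (fun x => v x * (s x)⁻¹) 2 μ := by
    refine MemLp.of_le_mul (c := C) hs2 (by have := v.measurable; fun_prop) ?_
    filter_upwards [hv] with x hx
    have hp := hpos x
    rw [Real.norm_eq_abs, Real.norm_eq_abs, abs_mul, abs_inv, abs_of_pos hp, mul_inv_le_iff₀ hp]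
    calc _ ≤ _ := hx
      _ = _ := by ring
  let w : Lp ℝ 2 μ := hw.toLp
  have hwv : czMul μ S w = v := by
    apply AEEqFun.ext
    filter_upwards [hmul w, hw.coeFn_toLp] with x h1 h2
    rw [h1, h2, mul_assoc, inv_mul_cancel₀ (hpos x).ne', mul_one]
  have hae : (fun x => inner ℝ ((R u) x) (w x)) =ᵐ[μ] fun x => czMul μ S' (R u) x * v x := by
    filter_upwards [hw.coeFn_toLp, AEEqFun.coeFn_mul (R u : α →ₘ[μ] ℝ) S', hS'] with x h2 h1 h3
    have e : czMul μ S' (R u) x = (R u) x * (s x)⁻¹ := by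
      show ((R u : α →ₘ[μ] ℝ) * S') x = _
      rw [h1, Pi.mul_apply, h3]
    rw [h2, e]; simp; ring
  refine ⟨(L2.integrable_inner (𝕜 := ℝ) (R u) w).congr hae, ?_⟩
  rw [← integral_congr_ae hae, ← L2.inner_def, hR, hwv]

end

section
variable {α : Type*} [MeasurableSpace α]

lemma cz_sgn {r : α → ℝ} (hr : Measurable r) : ∃ e : α → ℝ, Measurable e ∧ (∀ x, |e x| = 1) ∧
    ∀ x, r x * e x = |r x| := by
  refine ⟨fun x => if 0 ≤ r x then 1 else -1,
    Measurable.ite (measurableSet_le measurable_const hr) measurable_const measurable_const,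
    fun x => ?_, fun x => ?_⟩
  · simp only; split_ifs <;> simp
  · simp only; split_ifs with h
    · rw [abs_of_nonneg h, mul_one]
    · rw [abs_of_neg (not_le.1 h)]; ring

lemma cz_rep_top (μ : Measure α) {h : α → ℝ} (hh : Measurable h) (hpos : ∀ x, 0 < h x)
    (hi : Integrable h μ) (r : α →ₘ[μ] ℝ) (b : (α →ₘ[μ] ℝ) → ℝ)
    (H : ∀ v : α →ₘ[μ] ℝ, ∀ C : ℝ, (∀ᵐ x ∂μ, |v x| ≤ C * h x) →
      Integrable (fun x => r x * v x) μ ∧ b v = ∫ x, r x * v x ∂μ)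
    {B : ℝ≥0∞} (hB : B ≠ ⊤) (hb : ∀ v : α →ₘ[μ] ℝ, MemLp v 1 μ → ‖b v‖ₑ ≤ B * eLpNorm v 1 μ) :
    eLpNorm r ⊤ μ ≤ B := by
  obtain ⟨e, hem, he1, her⟩ := cz_sgn r.measurable
  have hm := r.measurable
  have key : ∀ A, MeasurableSet A → Integrable (A.indicator fun x => |r x| * h x) μ ∧
      ∫ x in A, |r x| * h x ∂μ ≤ ∫ x in A, B.toReal * h x ∂μ := by
    intro A hA
    let w : α → ℝ := A.indicator (fun x => e x * h x)
    have hwm : Measurable w := (hem.mul hh).indicator hA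
    let v : α →ₘ[μ] ℝ := AEEqFun.mk w hwm.aestronglyMeasurable
    have hv : ∀ᵐ x ∂μ, v x = w x := AEEqFun.coeFn_mk _ _
    have hwabs : ∀ x, |w x| = A.indicator h x := by
      intro x
      by_cases hx : x ∈ A
      · simp [w, hx, abs_mul, he1, abs_of_pos (hpos x)]
      · simp [w, hx]
    obtain ⟨h1, h2⟩ := H v 1 (by
      filter_upwards [hv] with x hx
      rw [hx, hwabs, one_mul]
      exact Set.indicator_le_self' (fun _ _ => (hpos x).le) x)
    have hae : (fun x => r x * v x) =ᵐ[μ] A.indicator fun x => |r x| * h x := by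
      filter_upwards [hv] with x hx
      rw [hx]
      by_cases hx : x ∈ A
      · simp only [w, Set.indicator_of_mem hx]
        rw [← her]; ring
      · simp [w, hx]
    refine ⟨h1.congr hae, ?_⟩
    rw [integral_congr_ae hae, integral_indicator hA] at h2
    have hAi : Integrable (A.indicator h) μ := hi.indicator hA
    have hn : eLpNorm v 1 μ = ENNReal.ofReal (∫ x in A, h x ∂μ) := by
      rw [eLpNorm_congr_ae hv, eLpNorm_one_eq_lintegral_enorm, ← integral_indicator hA,
        ofReal_integral_eq_lintegral_ofReal hAi (Filter.Eventually.of_forall fun x =>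
          Set.indicator_nonneg (fun x _ => (hpos x).le) x)]
      refine lintegral_congr fun x => ?_
      rw [← ofReal_norm, Real.norm_eq_abs, hwabs]
    have hv1 : MemLp v 1 μ := ⟨AEEqFun.aestronglyMeasurable _, by rw [hn]; simp⟩
    have h3 := hb v hv1
    rw [hn] at h3
    have h4 := ENNReal.toReal_mono (ENNReal.mul_ne_top hB ENNReal.ofReal_ne_top) h3
    rw [toReal_enorm, ENNReal.toReal_mul, ENNReal.toReal_ofReal
      (integral_nonneg fun x => (hpos x).le)] at h4
    rw [← h2, integral_const_mul]
    exact (le_abs_self _).trans h4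
  have hle := ae_le_of_forall_setIntegral_le (f := fun x => |r x| * h x)
    (g := fun x => B.toReal * h x) (by simpa using (key Set.univ MeasurableSet.univ).1)
    (hi.const_mul _) (fun A hA _ => (key A hA).2)
  rw [eLpNorm_exponent_top]
  refine eLpNormEssSup_le_of_ae_enorm_bound ?_
  filter_upwards [hle] with x hx
  have := le_of_mul_le_mul_right hx (hpos x)
  rw [← ofReal_norm]
  exact ENNReal.ofReal_le_of_le_toReal this

lemma cz_rep_one (μ : Measure α) {h : α → ℝ} (hh : Measurable h) (hpos : ∀ x, 0 < h x)
    (r : α →ₘ[μ] ℝ) (b : (α →ₘ[μ] ℝ) → ℝ)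
    (H : ∀ v : α →ₘ[μ] ℝ, ∀ C : ℝ, (∀ᵐ x ∂μ, |v x| ≤ C * h x) →
      Integrable (fun x => r x * v x) μ ∧ b v = ∫ x, r x * v x ∂μ)
    {B : ℝ≥0∞} (hb : ∀ v : α →ₘ[μ] ℝ, MemLp v ⊤ μ → ‖b v‖ₑ ≤ B * eLpNorm v ⊤ μ) :
    eLpNorm r 1 μ ≤ B := by
  obtain ⟨e, hem, he1, her⟩ := cz_sgn r.measurable
  have hm := r.measurable
  have key : ∀ n : ℕ, ∫⁻ x, ENNReal.ofReal (|r x| * min 1 (n * h x)) ∂μ ≤ B := by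
    intro n
    have hk : ∀ x, 0 ≤ min 1 (n * h x) := fun x =>
      le_min zero_le_one (mul_nonneg (Nat.cast_nonneg n) (hpos x).le)
    let w : α → ℝ := fun x => e x * min 1 (n * h x)
    have hwm : Measurable w := by fun_prop
    let v : α →ₘ[μ] ℝ := AEEqFun.mk w hwm.aestronglyMeasurable
    have hv : ∀ᵐ x ∂μ, v x = w x := AEEqFun.coeFn_mk _ _
    have hwabs : ∀ x, |w x| = min 1 (n * h x) := by
      intro x
      rw [abs_mul, he1, one_mul, abs_of_nonneg (hk x)]
    obtain ⟨h1, h2⟩ := H v n (by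
      filter_upwards [hv] with x hx
      rw [hx, hwabs]; exact min_le_right _ _)
    have hae : (fun x => r x * v x) =ᵐ[μ] fun x => |r x| * min 1 (n * h x) := by
      filter_upwards [hv] with x hx
      rw [hx, ← her]; simp only [w]; ring
    have hn : eLpNorm v ⊤ μ ≤ 1 := by
      rw [eLpNorm_exponent_top]
      refine eLpNormEssSup_le_of_ae_enorm_bound ?_
      filter_upwards [hv] with x hx
      rw [hx, ← ofReal_norm, Real.norm_eq_abs, hwabs]
      exact ENNReal.ofReal_le_one.2 (min_le_left _ _)
    have h3 := hb v ⟨AEEqFun.aestronglyMeasurable _, hn.trans_lt ENNReal.one_lt_top⟩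
    rw [integral_congr_ae hae] at h2
    rw [← ofReal_integral_eq_lintegral_ofReal (h1.congr hae)
      (Filter.Eventually.of_forall fun x => mul_nonneg (abs_nonneg _) (hk x)), ← h2]
    calc ENNReal.ofReal (b v) ≤ ‖b v‖ₑ := by
          rw [← ofReal_norm]; exact ENNReal.ofReal_le_ofReal (le_abs_self _)
      _ ≤ B * eLpNorm v ⊤ μ := h3
      _ ≤ B * 1 := by gcongr
      _ = B := mul_one B
  rw [eLpNorm_one_eq_lintegral_enorm]
  have hlim : Filter.Tendsto (fun n : ℕ => ∫⁻ x, ENNReal.ofReal (|r x| * min 1 (n * h x)) ∂μ)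
      Filter.atTop (nhds (∫⁻ x, ‖r x‖ₑ ∂μ)) := by
    refine lintegral_tendsto_of_tendsto_of_monotone (fun n => by fun_prop) ?_ ?_
    · refine Filter.Eventually.of_forall fun x => fun i j hij => ?_
      have := hpos x
      have hij' : (i:ℝ) ≤ j := by exact_mod_cast hij
      apply ENNReal.ofReal_le_ofReal
      gcongr
    · refine Filter.Eventually.of_forall fun x => ?_
      refine tendsto_const_nhds.congr' ?_
      have : Filter.Tendsto (fun n : ℕ => n * h x) Filter.atTop Filter.atTop :=
        tendsto_natCast_atTop_atTop.atTop_mul_const (hpos x)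
      filter_upwards [this.eventually_ge_atTop 1] with n hn
      rw [min_eq_left hn, mul_one, ← ofReal_norm, Real.norm_eq_abs]
  exact le_of_tendsto' hlim key

lemma cz_weight (μ : Measure α) [SigmaFinite μ] : ∃ s : α → ℝ, Measurable s ∧ (∀ x, 0 < s x) ∧
    (∀ x, s x ≤ 1) ∧ MemLp s 2 μ ∧ Integrable (fun x => s x ^ 2) μ := by
  obtain ⟨g, hg0, hgm, hgi⟩ := exists_pos_lintegral_lt_of_sigmaFinite μ one_ne_zero
  have hgm' : Measurable (fun x => (g x : ℝ)) := by fun_prop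
  have hi : Integrable (fun x => (g x : ℝ)) μ := by
    refine ⟨hgm'.aestronglyMeasurable, ?_⟩
    refine lt_of_le_of_lt (le_of_eq ?_) (hgi.trans ENNReal.one_lt_top)
    refine lintegral_congr fun x => ?_
    simp
  have hm : Measurable (fun x => Real.sqrt (min 1 (g x : ℝ))) := by fun_prop
  have hsq : ∀ x, Real.sqrt (min 1 (g x : ℝ)) ^ 2 = min 1 (g x : ℝ) := fun x =>
    Real.sq_sqrt (le_min zero_le_one (g x).2)
  have hint : Integrable (fun x => Real.sqrt (min 1 (g x : ℝ)) ^ 2) μ := by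
    simp_rw [hsq]
    refine hi.mono' (by fun_prop) (Filter.Eventually.of_forall fun x => ?_)
    rw [Real.norm_eq_abs, abs_of_nonneg (le_min zero_le_one (NNReal.coe_nonneg (g x)))]
    exact min_le_right _ _
  refine ⟨_, hm, fun x => Real.sqrt_pos.2 (lt_min one_pos (hg0 x)),
    fun x => Real.sqrt_le_one.2 (min_le_left _ _), ?_, hint⟩
  exact (memLp_two_iff_integrable_sq hm.aestronglyMeasurable).2 hint

end

section
variable {α : Type*} [MeasurableSpace α]

/-- The inclusion of `L¹` into the space of all measurable functions. -/
noncomputable def czIncl (μ : Measure α) : Lp ℝ 1 μ →ₗ[ℝ] (α →ₘ[μ] ℝ) where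
  toFun w := (w : α →ₘ[μ] ℝ)
  map_add' _ _ := rfl
  map_smul' _ _ := rfl

lemma cz_operator (μ : Measure α) (β : (α →ₘ[μ] ℝ) →ₗ[ℝ] (α →ₘ[μ] ℝ) →ₗ[ℝ] ℝ)
    (hβ : czAdm μ β) {s : α → ℝ} (hs : Measurable s) (hpos : ∀ x, 0 < s x) (hs1 : ∀ x, s x ≤ 1)
    (hs2 : MemLp s 2 μ) (hsi : Integrable (fun x => s x ^ 2) μ) :
    ∃ T : (α →ₘ[μ] ℝ) →ₗ[ℝ] (α →ₘ[μ] ℝ),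
      (∀ u : α →ₘ[μ] ℝ, eLpNorm (T u) 1 μ ≤ eLpNorm u 1 μ) ∧
      (∀ u : α →ₘ[μ] ℝ, eLpNorm (T u) ⊤ μ ≤ eLpNorm u ⊤ μ) ∧
      ∀ u : α →ₘ[μ] ℝ, (MemLp u 1 μ ∨ MemLp u ⊤ μ) → ∀ v : α →ₘ[μ] ℝ, ∀ C : ℝ,
        (∀ᵐ x ∂μ, |v x| ≤ C * s x ^ 2) →
        Integrable (fun x => T u x * v x) μ ∧ β u v = ∫ x, T u x * v x ∂μ := by
  obtain ⟨T0, hT0⟩ := cz_rep μ β hβ hs hpos hs2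
  have hh : Measurable (fun x => s x ^ 2) := by fun_prop
  have hhpos : ∀ x, 0 < s x ^ 2 := fun x => pow_pos (hpos x) 2
  have hT0top : ∀ u : czL μ ⊤, eLpNorm (T0 u) ⊤ μ ≤ eLpNorm (u : α →ₘ[μ] ℝ) ⊤ μ := fun u =>
    cz_rep_top μ hh hhpos hsi (T0 u) (β u) (hT0 u) u.2.2.ne (fun v hv => hβ.2 u v u.2 hv)
  have hT01 : ∀ u : czL μ ⊤, MemLp (u : α →ₘ[μ] ℝ) 1 μ →
      eLpNorm (T0 u) 1 μ ≤ eLpNorm (u : α →ₘ[μ] ℝ) 1 μ := fun u hu =>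
    cz_rep_one μ hh hhpos (T0 u) (β u) (hT0 u) (fun v hv => hβ.1 u v hu hv)
  let D : Submodule ℝ (α →ₘ[μ] ℝ) := czL μ 1 ⊓ czL μ ⊤
  let e : D →ₗ[ℝ] Lp ℝ 1 μ :=
    { toFun := fun u => ⟨u, Lp.mem_Lp_iff_memLp.2 u.2.1⟩
      map_add' := fun _ _ => rfl
      map_smul' := fun _ _ => rfl }
  have hmem : ∀ u : D, T0 ⟨u, u.2.2⟩ ∈ Lp ℝ 1 μ := fun u =>
    Lp.mem_Lp_iff_eLpNorm_lt_top.2 ((hT01 ⟨u, u.2.2⟩ u.2.1).trans_lt u.2.1.2)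
  let F : D →ₗ[ℝ] Lp ℝ 1 μ :=
    { toFun := fun u => ⟨T0 ⟨u, u.2.2⟩, hmem u⟩
      map_add' := fun a b => Subtype.ext (T0.map_add ⟨a, a.2.2⟩ ⟨b, b.2.2⟩)
      map_smul' := fun r a => Subtype.ext (T0.map_smul r ⟨a, a.2.2⟩) }
  have hnorm : ∀ u, ‖F u‖ ≤ 1 * ‖e u‖ := by
    intro u
    rw [one_mul, Lp.norm_def, Lp.norm_def]
    exact ENNReal.toReal_mono u.2.1.2.ne (hT01 ⟨u, u.2.2⟩ u.2.1)
  have hdense : DenseRange e := by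
    have h1 := Lp.simpleFunc.dense (E := ℝ) (μ := μ) (p := 1) ENNReal.one_ne_top
    refine h1.mono ?_
    intro w hw
    have h2 := Lp.simpleFunc.toSimpleFunc_eq_toFun (⟨w, hw⟩ : Lp.simpleFunc ℝ 1 μ)
    have h3 : MemLp w ⊤ μ :=
      (memLp_congr_ae h2).1 (SimpleFunc.memLp_top _ μ)
    exact ⟨⟨w, Lp.memLp w, h3⟩, rfl⟩
  let Tc := F.extendOfNorm e
  have hTc : ∀ x, Tc (e x) = F x := LinearMap.extendOfNorm_eq hdense ⟨1, hnorm⟩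
  have hTcn : ∀ x, ‖Tc x‖ ≤ 1 * ‖x‖ := LinearMap.norm_extendOfNorm_apply_le hdense 1 hnorm
  let e1 : czL μ 1 →ₗ[ℝ] Lp ℝ 1 μ :=
    { toFun := fun u => ⟨u, Lp.mem_Lp_iff_memLp.2 u.2⟩
      map_add' := fun _ _ => rfl
      map_smul' := fun _ _ => rfl }
  let T1 : czL μ 1 →ₗ[ℝ] (α →ₘ[μ] ℝ) := czIncl μ ∘ₗ Tc.toLinearMap ∘ₗ e1
  have hagree : ∀ (x : czL μ ⊤) (y : czL μ 1), (x : α →ₘ[μ] ℝ) = y → T0 x = T1 y := by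
    rintro ⟨x, hx⟩ ⟨y, hy⟩ hxy
    obtain rfl : x = y := hxy
    have := hTc ⟨x, hy, hx⟩
    exact (congrArg Subtype.val this).symm
  let P : (α →ₘ[μ] ℝ) →ₗ.[ℝ] (α →ₘ[μ] ℝ) := ⟨czL μ ⊤, T0⟩
  let Q : (α →ₘ[μ] ℝ) →ₗ.[ℝ] (α →ₘ[μ] ℝ) := ⟨czL μ 1, T1⟩
  obtain ⟨T, hT⟩ := LinearMap.exists_extend (P.sup Q hagree).toFun
  have hTtop : ∀ u : czL μ ⊤, T u = T0 u := by
    intro u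
    have h1 := (P.left_le_sup Q hagree).2 (x := u) (y := ⟨u, (P.left_le_sup Q hagree).1 u.2⟩) rfl
    have h2 := LinearMap.congr_fun hT ⟨u, (P.left_le_sup Q hagree).1 u.2⟩
    exact h2.trans h1.symm
  have hTone : ∀ u : czL μ 1, T u = T1 u := by
    intro u
    have h1 := (P.right_le_sup Q hagree).2 (x := u) (y := ⟨u, (P.right_le_sup Q hagree).1 u.2⟩) rfl
    have h2 := LinearMap.congr_fun hT ⟨u, (P.right_le_sup Q hagree).1 u.2⟩
    exact h2.trans h1.symm
  refine ⟨T, ?_, ?_, ?_⟩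
  · intro u
    by_cases hu : MemLp u 1 μ
    · rw [hTone ⟨u, hu⟩]
      have h1 := hTcn (e1 ⟨u, hu⟩)
      rw [one_mul, Lp.norm_def, Lp.norm_def] at h1
      exact (ENNReal.toReal_le_toReal (Lp.memLp _).2.ne hu.2.ne).1 h1
    · have : eLpNorm u 1 μ = ⊤ := by
        by_contra hne
        exact hu ⟨AEEqFun.aestronglyMeasurable u, lt_top_iff_ne_top.2 hne⟩
      rw [this]; exact le_top
  · intro u
    by_cases hu : MemLp u ⊤ μ
    · rw [hTtop ⟨u, hu⟩]
      exact hT0top ⟨u, hu⟩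
    · have : eLpNorm u ⊤ μ = ⊤ := by
        by_contra hne
        exact hu ⟨AEEqFun.aestronglyMeasurable u, lt_top_iff_ne_top.2 hne⟩
      rw [this]; exact le_top
  · intro u hu v C hv
    rcases hu with hu | hu
    · have hvb : ∀ᵐ x ∂μ, ‖v x‖ ≤ |C| := by
        filter_upwards [hv] with x hx
        have h1 : s x ^ 2 ≤ 1 := pow_le_one₀ (hpos x).le (hs1 x)
        calc ‖v x‖ ≤ C * s x ^ 2 := hx
          _ ≤ |C| * s x ^ 2 := by
            have := (hhpos x).le
            gcongr; exact le_abs_self C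
          _ ≤ |C| * 1 := by gcongr
          _ = |C| := mul_one _
      have hvm := v.measurable
      have hvtop : MemLp v ⊤ μ := memLp_top_of_bound (AEEqFun.aestronglyMeasurable v) _ hvb
      have hint : ∀ w : Lp ℝ 1 μ, Integrable (fun x => w x * v x) μ := fun w => by
        have hwi := memLp_one_iff_integrable.1 (Lp.memLp w)
        exact hwi.mul_bdd hvm.aestronglyMeasurable hvb
      obtain ⟨G, hG⟩ := cz_functional μ v
      have hGb : ∀ w : Lp ℝ 1 μ, ‖(G ∘ₗ czIncl μ) w‖ ≤ |C| * ‖w‖ := by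
        intro w
        show ‖G w‖ ≤ _
        rw [hG _ (hint w), L1.norm_eq_integral_norm, ← integral_const_mul]
        have hwi := memLp_one_iff_integrable.1 (Lp.memLp w)
        refine norm_integral_le_of_norm_le (hwi.norm.const_mul _) ?_
        filter_upwards [hvb] with x hx
        rw [norm_mul, mul_comm]
        gcongr
      have hBb : ∀ w : Lp ℝ 1 μ, ‖(β.flip v ∘ₗ czIncl μ) w‖ ≤ (eLpNorm v ⊤ μ).toReal * ‖w‖ := by
        intro w
        show ‖β w v‖ ≤ _
        have h1 := ENNReal.toReal_mono (ENNReal.mul_ne_top (Lp.memLp w).2.ne hvtop.2.ne)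
          (hβ.1 w v (Lp.memLp w) hvtop)
        rw [toReal_enorm, ENNReal.toReal_mul] at h1
        rw [Lp.norm_def, mul_comm]
        exact h1
      let G' := LinearMap.mkContinuous (G ∘ₗ czIncl μ) _ hGb
      let B' := LinearMap.mkContinuous (β.flip v ∘ₗ czIncl μ) _ hBb
      have heq : ∀ w : Lp ℝ 1 μ, B' w = G' (Tc w) := by
        refine hdense.induction ?_ (isClosed_eq B'.continuous (G'.continuous.comp Tc.continuous))
        rintro _ ⟨y, rfl⟩
        rw [hTc y]
        show β y v = G (T0 ⟨y, y.2.2⟩)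
        obtain ⟨h1, h2⟩ := hT0 ⟨y, y.2.2⟩ v C hv
        rw [hG _ h1]; exact h2
      rw [hTone ⟨u, hu⟩]
      refine ⟨hint (Tc (e1 ⟨u, hu⟩)), ?_⟩
      have h1 := heq (e1 ⟨u, hu⟩)
      refine h1.trans ?_
      exact hG _ (hint (Tc (e1 ⟨u, hu⟩)))
    · rw [hTtop ⟨u, hu⟩]
      exact hT0 ⟨u, hu⟩ v C hv

lemma cz_forward (μ : Measure α) [SigmaFinite μ] (f g : α →ₘ[μ] ℝ)
    (hle : ∀ t : ℝ, 0 ≤ t → czK μ g (ENNReal.ofReal t) ≤ czK μ f (ENNReal.ofReal t)) :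
    ∃ T : (α →ₘ[μ] ℝ) →ₗ[ℝ] (α →ₘ[μ] ℝ),
      (∀ u : α →ₘ[μ] ℝ, eLpNorm (T u) 1 μ ≤ eLpNorm u 1 μ) ∧
      (∀ u : α →ₘ[μ] ℝ, eLpNorm (T u) ⊤ μ ≤ eLpNorm u ⊤ μ) ∧ T f = g := by
  by_cases hf : f ∈ czL μ 1 ⊔ czL μ ⊤
  · obtain ⟨f1, h1, f2, h2, hf12⟩ := Submodule.mem_sup.1 hf
    obtain ⟨β, hβ, hβf⟩ := cz_mean_form μ f f1 f2 g hf12.symm h1 h2 hle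
    obtain ⟨s, hs, hpos, hs1, hs2, hsi⟩ := cz_weight μ
    obtain ⟨T, hT1, hT2, hT⟩ := cz_operator μ β hβ hs hpos hs1 hs2 hsi
    refine ⟨T, hT1, hT2, ?_⟩
    have hTf : ∀ v : α →ₘ[μ] ℝ, (∀ᵐ x ∂μ, |v x| ≤ 1 * s x ^ 2) →
        Integrable (fun x => T f x * v x) μ ∧ β f v = ∫ x, T f x * v x ∂μ := by
      intro v hv
      obtain ⟨a1, b1⟩ := hT f1 (Or.inl h1) v 1 hv
      obtain ⟨a2, b2⟩ := hT f2 (Or.inr h2) v 1 hv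
      have hae : (fun x => T f1 x * v x + T f2 x * v x) =ᵐ[μ] fun x => T f x * v x := by
        rw [← hf12, map_add]
        filter_upwards [AEEqFun.coeFn_add (T f1) (T f2)] with x hx
        rw [hx, Pi.add_apply]; ring
      refine ⟨(a1.add a2).congr hae, ?_⟩
      rw [← integral_congr_ae hae, integral_add a1 a2, ← b1, ← b2, ← hf12, map_add]; rfl
    have key : ∀ A, MeasurableSet A →
        Integrable (A.indicator fun x => (T f x - g x) * s x ^ 2) μ ∧
        ∫ x in A, (T f x - g x) * s x ^ 2 ∂μ = 0 := by
      intro A hA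
      let w : α → ℝ := A.indicator fun x => s x ^ 2
      have hwm : Measurable w := (by fun_prop : Measurable fun x => s x ^ 2).indicator hA
      let v : α →ₘ[μ] ℝ := AEEqFun.mk w hwm.aestronglyMeasurable
      have hvw : ∀ᵐ x ∂μ, v x = w x := AEEqFun.coeFn_mk _ _
      have hw0 : ∀ x, 0 ≤ w x := fun x => Set.indicator_nonneg (fun x _ => sq_nonneg (s x)) x
      have hwle : ∀ x, w x ≤ s x ^ 2 := fun x =>
        Set.indicator_le_self' (fun _ _ => sq_nonneg (s x)) x
      have hv : ∀ᵐ x ∂μ, |v x| ≤ 1 * s x ^ 2 := by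
        filter_upwards [hvw] with x hx
        rw [hx, abs_of_nonneg (hw0 x), one_mul]; exact hwle x
      have hv1 : MemLp v 1 μ := by
        rw [memLp_congr_ae hvw, memLp_one_iff_integrable]
        exact hsi.indicator hA
      have hvt : MemLp v ⊤ μ := by
        refine memLp_top_of_bound (AEEqFun.aestronglyMeasurable v) 1 ?_
        filter_upwards [hv] with x hx
        refine hx.trans ?_
        rw [one_mul]; exact pow_le_one₀ (hpos x).le (hs1 x)
      obtain ⟨a1, b1⟩ := hTf v hv
      obtain ⟨a2, b2⟩ := hβf v hv1 hvt
      have hae : (fun x => T f x * v x - v x * g x) =ᵐ[μ]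
          A.indicator fun x => (T f x - g x) * s x ^ 2 := by
        filter_upwards [hvw] with x hx
        rw [hx]
        by_cases hxA : x ∈ A
        · simp only [w, Set.indicator_of_mem hxA]; ring
        · simp [w, hxA]
      refine ⟨(a1.sub a2).congr hae, ?_⟩
      rw [← integral_indicator hA, ← integral_congr_ae hae, integral_sub a1 a2, ← b1, ← b2,
        sub_self]
    have hz := Integrable.ae_eq_zero_of_forall_setIntegral_eq_zero
      (f := fun x => (T f x - g x) * s x ^ 2) (by simpa using (key Set.univ MeasurableSet.univ).1)
      (fun A hA _ => (key A hA).2)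
    apply AEEqFun.ext
    filter_upwards [hz] with x hx
    have h3 : (T f x - g x) * s x ^ 2 = 0 := hx
    rcases mul_eq_zero.1 h3 with h | h
    · linarith
    · exact absurd h (pow_pos (hpos x) 2).ne'
  · obtain ⟨φ, hφf, hφ⟩ := Submodule.exists_le_ker_of_notMem hf
    refine ⟨φ.smulRight ((φ f)⁻¹ • g), ?_, ?_, ?_⟩
    · intro u
      by_cases hu : MemLp u 1 μ
      · have : φ u = 0 := hφ (Submodule.mem_sup_left (show u ∈ czL μ 1 from hu))
        rw [LinearMap.smulRight_apply, this, zero_smul, eLpNorm_congr_ae AEEqFun.coeFn_zero]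
        simp
      · have : eLpNorm u 1 μ = ⊤ := by
          by_contra hne
          exact hu ⟨AEEqFun.aestronglyMeasurable u, lt_top_iff_ne_top.2 hne⟩
        rw [this]; exact le_top
    · intro u
      by_cases hu : MemLp u ⊤ μ
      · have : φ u = 0 := hφ (Submodule.mem_sup_right (show u ∈ czL μ ⊤ from hu))
        rw [LinearMap.smulRight_apply, this, zero_smul, eLpNorm_congr_ae AEEqFun.coeFn_zero]
        simp
      · have : eLpNorm u ⊤ μ = ⊤ := by
          by_contra hne
          exact hu ⟨AEEqFun.aestronglyMeasurable u, lt_top_iff_ne_top.2 hne⟩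
        rw [this]; exact le_top
    · rw [LinearMap.smulRight_apply, smul_smul, mul_inv_cancel₀ hφf, one_smul]
end

/-- Calderón's theorem for the couple `(L¹, L∞)`.
Forward direction: if `∫₀ᵗ g* ≤ ∫₀ᵗ f*` for all `t > 0`, then there is a linear
operator `T`, simultaneously contractive on `L¹` and on `L∞`, with `Tf = g`.
Converse: any such contraction `T` satisfies `∫₀ᵗ (Tf)* ≤ ∫₀ᵗ f*`. -/
theorem calderon_L1_Linfty {α : Type*} [MeasurableSpace α]
    (μ : Measure α) [SigmaFinite μ] :
    (∀ f g : α →ₘ[μ] ℝ,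
      (∀ t : ℝ, 0 < t →
        ∫⁻ s in Set.Ioc (0:ℝ) t, decRearr μ (g : α → ℝ) s ≤
          ∫⁻ s in Set.Ioc (0:ℝ) t, decRearr μ (f : α → ℝ) s) →
      ∃ T : (α →ₘ[μ] ℝ) →ₗ[ℝ] (α →ₘ[μ] ℝ),
        (∀ u : α →ₘ[μ] ℝ, eLpNorm ((T u : α →ₘ[μ] ℝ) : α → ℝ) 1 μ ≤
          eLpNorm (u : α → ℝ) 1 μ) ∧
        (∀ u : α →ₘ[μ] ℝ, eLpNorm ((T u : α →ₘ[μ] ℝ) : α → ℝ) ⊤ μ ≤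
          eLpNorm (u : α → ℝ) ⊤ μ) ∧
        T f = g) ∧
    (∀ T : (α →ₘ[μ] ℝ) →ₗ[ℝ] (α →ₘ[μ] ℝ),
      (∀ u : α →ₘ[μ] ℝ, eLpNorm ((T u : α →ₘ[μ] ℝ) : α → ℝ) 1 μ ≤
        eLpNorm (u : α → ℝ) 1 μ) →
      (∀ u : α →ₘ[μ] ℝ, eLpNorm ((T u : α →ₘ[μ] ℝ) : α → ℝ) ⊤ μ ≤
        eLpNorm (u : α → ℝ) ⊤ μ) →
      ∀ (f : α →ₘ[μ] ℝ) (t : ℝ), 0 < t →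
        ∫⁻ s in Set.Ioc (0:ℝ) t, decRearr μ ((T f : α →ₘ[μ] ℝ) : α → ℝ) s ≤
          ∫⁻ s in Set.Ioc (0:ℝ) t, decRearr μ (f : α → ℝ) s) := by
  refine ⟨fun f g hfg => ?_, fun T h1 h2 f t ht => cz_converse μ T h1 h2 f t ht⟩
  refine cz_forward μ f g fun t ht => ?_
  rcases ht.eq_or_lt with h0 | h0
  · rw [← h0]; simp [czK]
  · have h1 := hfg t h0
    rwa [cz_K_eq μ _ t ht, cz_K_eq μ _ t ht] at h1
end
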